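/- Let 𝔤 be a finite-dimensional complex simple Lie algebra of type E6, and let (e,h,f) be an sl2-triple in 𝔤 such that e is a distinguished nilpotent element which is not regular. Then e satisfies property (P). -/

import Mathlib

open scoped ComplexOrder

/-- The centralizer `𝔤^e = {x ∈ 𝔤 : ⁅x, e⁆ = 0}` of an element `e`, as a Lie subalgebra. -/
def centralizer (L : Type*) [LieRing L] [LieAlgebra ℂ L] (e : L) : LieSubalgebra ℂ L where
  carrier := {x : L | ⁅x, e⁆ = 0}
  add_mem' := fun {a b} ha hb => by
    simp only [Set.mem_setOf_eq] at *
    rw [add_lie, ha, hb, add_zero]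
  zero_mem' := by simp
  smul_mem' := fun c a ha => by
    simp only [Set.mem_setOf_eq] at *
    rw [smul_lie, ha, smul_zero]
  lie_mem' := fun {a b} ha hb => by
    simp only [Set.mem_setOf_eq] at *
    simp [lie_lie, ha, hb]

/-- Membership in the centre `𝔷(𝔤^e)` of the centralizer of `e`:
`v` centralizes `e` and commutes with every element of `𝔤^e`. -/
def InCenterOfCentralizer (L : Type*) [LieRing L] [LieAlgebra ℂ L] (e v : L) : Prop :=
  ⁅v, e⁆ = 0 ∧ ∀ y : L, ⁅y, e⁆ = 0 → ⁅v, y⁆ = 0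

/-- The centre `𝔷(𝔤^e)` of the centralizer of `e`, as a subspace of `L`. -/
def zCenter (L : Type*) [LieRing L] [LieAlgebra ℂ L] (e : L) : Submodule ℂ L where
  carrier := {v : L | ⁅v, e⁆ = 0 ∧ ∀ y : L, ⁅y, e⁆ = 0 → ⁅v, y⁆ = 0}
  add_mem' := fun {a b} ha hb => ⟨by rw [add_lie, ha.1, hb.1, add_zero],
    fun y hy => by rw [add_lie, ha.2 y hy, hb.2 y hy, add_zero]⟩
  zero_mem' := ⟨zero_lie e, fun y _ => zero_lie y⟩
  smul_mem' := fun c a ha => ⟨by rw [smul_lie, ha.1, smul_zero],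
    fun y hy => by rw [smul_lie, ha.2 y hy, smul_zero]⟩

/-- Property (P) for an `sl₂`-triple `(e, h, f)`: for every nonzero `v ∈ 𝔷(𝔤^e)`, the
eigenspace `𝔷_max` of the restriction of `ad h` to `𝔷(𝔤^e)` for its largest eigenvalue is
contained in `[[f, 𝔤^e], v] = {⁅⁅f, x⁆, v⁆ : x ∈ 𝔤^e}`. -/
def PropertyP (L : Type*) [LieRing L] [LieAlgebra ℂ L] (e h f : L) : Prop :=
  ∀ m : ℂ,
    (∃ z : L, z ≠ 0 ∧ InCenterOfCentralizer L e z ∧ ⁅h, z⁆ = m • z) →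
    (∀ m' : ℂ, (∃ z : L, z ≠ 0 ∧ InCenterOfCentralizer L e z ∧ ⁅h, z⁆ = m' • z) → m' ≤ m) →
    ∀ v : L, InCenterOfCentralizer L e v → v ≠ 0 →
      ∀ z : L, InCenterOfCentralizer L e z → ⁅h, z⁆ = m • z →
        ∃ x : L, ⁅x, e⁆ = 0 ∧ ⁅⁅f, x⁆, v⁆ = z

/-- The stabilizer `{x ∈ 𝔮 : ξ(⁅x, y⁆) = 0 for all y ∈ 𝔮}` of a linear functional `ξ`. -/
def coadStab (Q : Type*) [LieRing Q] [LieAlgebra ℂ Q] (ξ : Module.Dual ℂ Q) : Submodule ℂ Q where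
  carrier := {x : Q | ∀ y : Q, ξ ⁅x, y⁆ = 0}
  add_mem' := fun {a b} ha hb y => by rw [add_lie, map_add, ha y, hb y, add_zero]
  zero_mem' := fun y => by rw [zero_lie, map_zero]
  smul_mem' := fun c a ha y => by rw [smul_lie, map_smul, ha y, smul_zero]

/-- The index of a complex Lie algebra:
`ind 𝔮 = min_{ξ ∈ 𝔮*} dim {x ∈ 𝔮 : ξ(⁅x, y⁆) = 0 for all y ∈ 𝔮}`. -/
noncomputable def lieIndex (Q : Type*) [LieRing Q] [LieAlgebra ℂ Q] : ℕ :=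
  ⨅ ξ : Module.Dual ℂ Q, Module.finrank ℂ ↥(coadStab Q ξ)

/-- A nilpotent element `e` is distinguished if the only `x ∈ 𝔤^e` such that `ad x` is a
semisimple endomorphism of `𝔤` is `x = 0`. -/
def IsDistinguished (L : Type*) [LieRing L] [LieAlgebra ℂ L] (e : L) : Prop :=
  ∀ x : L, ⁅x, e⁆ = 0 → (LieAlgebra.ad ℂ L x).IsSemisimple → x = 0

/-!
After a change of basis, `h` lies in the Cartan subalgebra of an E₆ basis and takes nonnegative
integral values `a` on the simple roots: its eigenvalues are integers, all Cartan subalgebras are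
conjugate, and reflections make `h` dominant. For distinguished `e` one has `a k ≤ 2`, and `ad e`
embeds `𝔤(-2)` into `𝔤(0)` and `𝔤(0)` into `𝔤(2)`, so `dim 𝔤(0) = dim 𝔤(2)`; this leaves only the
weighted Dynkin diagrams of the orbits E₆, E₆(a₁) and E₆(a₃). By Malcev's theorem the
automorphisms fixing `h` act transitively on the `sl₂`-triples containing `h`, so each diagram needs
to be treated for a single explicit triple only.

A root vector of the highest root is central in `𝔤ᵉ`, hence the largest eigenvalue on the centre is
the weight of the highest root. It remains to find the highest weight space in `[[f, 𝔤ᵉ], v]`, where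
`v ≠ 0` is central, and suitable elements of `𝔤ᵉ` make the pairing `(x, v) ↦ ⁅⁅f, x⁆, v⁆`
triangular. Only for E₆(a₃), where the highest weight space has dimension two, does triangularity
have to be replaced by an independence argument.
-/

/-! ### Sparse integer vectors -/

/-- An integer linear combination of the members of a family indexed by `ℕ`, given by its pairs
(index, coefficient); repeated indices are allowed and add up. -/
abbrev SparseVector := List (ℕ × ℤ)

namespace SparseVector

variable {M N : Type*} [AddCommGroup M] [AddCommGroup N]

/-- The element `∑ cᵢ B(kᵢ)` of a module encoded by the sparse vector with entries `(kᵢ, cᵢ)`. -/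
def combine (B : ℕ → M) : SparseVector → M
  | [] => 0
  | t :: u => t.2 • B t.1 + combine B u

/-- The sparse vector `c bₖ + u`, where `bₖ` is the `k`-th member of the family. Zero coefficients
are dropped, so that vanishing can be tested by `List.isEmpty`. -/
def addSingle (c : ℤ) (k : ℕ) (u : SparseVector) : SparseVector :=
  match c with
  | .ofNat 0 => u
  | c =>
    match u with
    | [] => [(k, c)]
    | t :: u => bif Nat.beq t.1 k then addSingle (t.2 + c) k u else t :: addSingle c k u

lemma combine_addSingle (B : ℕ → M) (c : ℤ) (k : ℕ) (u : SparseVector) :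
    combine B (addSingle c k u) = c • B k + combine B u := by
  induction u generalizing c with
  | nil =>
    unfold addSingle
    split <;> simp [combine]
  | cons t u ih =>
    unfold addSingle
    split
    · simp
    · by_cases h : Nat.beq t.1 k = true
      · simp only [h, cond_true, ih, combine]
        rw [Nat.eq_of_beq_eq_true h]
        module
      · simp only [h, cond_false, combine, ih]
        module

/-- The sparse vector `c u + v`. -/
def addSMul (c : ℤ) (u v : SparseVector) : SparseVector :=
  u.foldr (fun t w => addSingle (c * t.2) t.1 w) v

lemma combine_addSMul (B : ℕ → M) (c : ℤ) (u v : SparseVector) :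
    combine B (addSMul c u v) = c • combine B u + combine B v := by
  induction u with
  | nil => simp [addSMul, combine]
  | cons t u ih =>
    simp only [addSMul, List.foldr_cons, combine_addSingle, combine] at ih ⊢
    rw [ih]
    module

/-- The image of a sparse vector under the additive map sending `bₖ` to `A k`. -/
def linExtend (A : ℕ → SparseVector) (u : SparseVector) : SparseVector :=
  u.foldr (fun t v => addSMul t.2 (A t.1) v) []

lemma combine_linExtend (B : ℕ → M) (C : ℕ → N) (φ : M →+ N) {A : ℕ → SparseVector}
    (h : ∀ k, φ (B k) = combine C (A k)) (u : SparseVector) :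
    combine C (linExtend A u) = φ (combine B u) := by
  induction u with
  | nil => simp [linExtend, combine]
  | cons t u ih =>
    simp only [linExtend, List.foldr_cons, combine_addSMul, combine, map_add, map_zsmul, h] at ih ⊢
    rw [ih]

lemma map_combine (φ : M →+ N) (B : ℕ → M) (u : SparseVector) :
    φ (combine B u) = combine (φ ∘ B) u := by
  induction u with
  | nil => simp [combine]
  | cons t u ih => simp [combine, ih]

lemma combine_mem {S : Type*} [SetLike S M] [AddSubgroupClass S M] {s : S} {B : ℕ → M}
    {u : SparseVector} (h : ∀ t ∈ u, B t.1 ∈ s) : combine B u ∈ s := by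
  induction u with
  | nil => exact zero_mem s
  | cons t u ih =>
    rw [List.forall_mem_cons] at h
    exact add_mem (zsmul_mem h.1 _) (ih h.2)

section Lie

variable {L : Type*} [LieRing L]

lemma lie_combine {B C : ℕ → L} {x : L} {A : ℕ → SparseVector}
    (h : ∀ k, ⁅x, B k⁆ = combine C (A k)) (u : SparseVector) :
    ⁅x, combine B u⁆ = combine C (linExtend A u) :=
  (combine_linExtend B C (LieAlgebra.ad ℤ L x).toAddMonoidHom h u).symm

/-- The bracket of two sparse vectors for the structure constants `⁅bᵢ, bⱼ⁆ = S i j`. -/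
def sparseLie (S : ℕ → ℕ → SparseVector) (u v : SparseVector) : SparseVector :=
  linExtend (fun i => linExtend (S i) v) u

lemma combine_sparseLie {B : ℕ → L} {S : ℕ → ℕ → SparseVector}
    (h : ∀ i j, ⁅B i, B j⁆ = combine B (S i j)) (u v : SparseVector) :
    combine B (sparseLie S u v) = ⁅combine B u, combine B v⁆ := by
  refine (combine_linExtend B B (-(LieAlgebra.ad ℤ L (combine B v))).toAddMonoidHom ?_ u).trans ?_
  · intro i
    rw [← lie_combine (h i)]
    simp
  · simp

end Lie

end SparseVector

/-! ### Fraction-free Gaussian elimination -/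

namespace Elimination

variable {R : Type*} [CommRing R]

/-- The value `∑ aₖ v(k)` of the linear form with coefficients `aₖ`. -/
def rowApply : List ℤ → (ℕ → R) → R
  | [], _ => 0
  | a :: l, v => a * v 0 + rowApply l (fun k => v (k + 1))

/-- The row `a r - b p`. -/
def subRows (a b : ℤ) : List ℤ → List ℤ → List ℤ
  | [], p => p.map fun y => -(b * y)
  | x :: r, [] => a * x :: subRows a b r []
  | x :: r, y :: p => (a * x - b * y) :: subRows a b r p

/-- The row obtained from `r` by eliminating the first unknown with the help of the row `p₀ :: p`
and dropping its coefficient. -/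
def reduceRow (p₀ : ℤ) (p : List ℤ) : List ℤ → List ℤ
  | [] => []
  | .ofNat 0 :: r => r
  | r₀ :: r => subRows p₀ r₀ r p

/-- The head and tail of the first row with nonzero leading coefficient. -/
def findPivot : List (List ℤ) → Option (ℤ × List ℤ)
  | [] => none
  | (.ofNat 0 :: _) :: l => findPivot l
  | (p₀ :: p) :: _ => some (p₀, p)
  | [] :: l => findPivot l

/-- Gaussian elimination: whether the rows, as linear forms in `n` unknowns, have rank `n`. -/
def fullRank : ℕ → List (List ℤ) → Bool
  | 0, _ => true
  | n + 1, rows =>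
    match findPivot rows with
    | none => false
    | some (p₀, p) => fullRank n (rows.map (reduceRow p₀ p))

lemma rowApply_eq_zero {l : List ℤ} {v : ℕ → R} (h : ∀ k, v k = 0) : rowApply l v = 0 := by
  induction l generalizing v with
  | nil => rfl
  | cons a l ih => rw [rowApply, h 0, ih fun k => h (k + 1), mul_zero, add_zero]

lemma rowApply_map_range (F : ℕ → ℤ) (n : ℕ) (v : ℕ → R) :
    rowApply ((List.range n).map F) v = ∑ k ∈ Finset.range n, F k * v k := by
  induction n generalizing F v with
  | zero => simp [rowApply]
  | succ n ih =>
    rw [List.range_succ_eq_map, List.map_cons, rowApply, List.map_map, ih (F ∘ Nat.succ),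
      Finset.sum_range_succ', add_comm]
    rfl

lemma rowApply_subRows (a b : ℤ) (r p : List ℤ) (v : ℕ → R) :
    rowApply (subRows a b r p) v = a * rowApply r v - b * rowApply p v := by
  induction r generalizing p v with
  | nil =>
    induction p generalizing v with
    | nil => simp [rowApply, subRows]
    | cons y p ih =>
      simp only [subRows, List.map_cons, rowApply] at ih ⊢
      rw [ih]
      push_cast
      ring
  | cons x r ih =>
    cases p <;>
    · simp only [subRows, rowApply, ih]
      push_cast
      ring

lemma findPivot_eq_some {rows : List (List ℤ)} {p₀ : ℤ} {p : List ℤ}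
    (h : findPivot rows = some (p₀, p)) : p₀ ≠ 0 ∧ (p₀ :: p) ∈ rows := by
  fun_induction findPivot rows <;> simp_all

lemma rowApply_reduceRow {p₀ : ℤ} {p r : List ℤ} {v : ℕ → R}
    (hp : rowApply (p₀ :: p) v = 0) (hr : rowApply r v = 0) :
    rowApply (reduceRow p₀ p r) (fun k => v (k + 1)) = 0 := by
  unfold reduceRow
  split
  · rfl
  · simpa [rowApply] using hr
  · rename_i r₀ r _
    rw [rowApply_subRows]
    simp only [rowApply] at hp hr
    linear_combination (p₀ : R) * hr - (r₀ : R) * hp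

theorem eq_zero_of_fullRank [NoZeroDivisors R] [CharZero R] {n : ℕ} {rows : List (List ℤ)}
    (h : fullRank n rows = true) {v : ℕ → R} (hv : ∀ r ∈ rows, rowApply r v = 0)
    (hvn : ∀ k, n ≤ k → v k = 0) (k : ℕ) : v k = 0 := by
  induction n generalizing rows v k with
  | zero => exact hvn k k.zero_le
  | succ n ih =>
    unfold fullRank at h
    split at h
    · simp at h
    rename_i p₀ p hp
    obtain ⟨hp₀, hpr⟩ := findPivot_eq_some hp
    have hsucc (k : ℕ) : v (k + 1) = 0 := by
      refine ih h (v := fun k => v (k + 1)) (fun r hr => ?_) (fun k hk => hvn _ (by omega)) k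
      obtain ⟨r', hr', rfl⟩ := List.mem_map.1 hr
      exact rowApply_reduceRow (hv _ hpr) (hv _ hr')
    cases k with
    | succ k => exact hsucc k
    | zero =>
      have hpv := hv _ hpr
      rw [rowApply, rowApply_eq_zero hsucc, add_zero, mul_eq_zero, Int.cast_eq_zero] at hpv
      exact hpv.resolve_left hp₀

end Elimination

/-! ### Structure constants of type E₆ -/

namespace E6

open SparseVector

/-- The positive roots: the octal digits are the coefficients on the simple roots, which come
first. -/
def positiveRoots : List ℕ :=
  [0o100000, 0o010000, 0o001000, 0o000100, 0o000010, 0o000001, 0o101000, 0o010100, 0o001100,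
    0o000110, 0o000011, 0o101100, 0o011100, 0o010110, 0o001110, 0o000111, 0o111100, 0o101110,
    0o011110, 0o010111, 0o001111, 0o111110, 0o101111, 0o011210, 0o011111, 0o111210, 0o111111,
    0o011211, 0o112210, 0o111211, 0o011221, 0o112211, 0o111221, 0o112221, 0o112321, 0o122321]

/-- The list `positiveRoots` stored in a single number with 18 bits per entry, for fast evaluation
by the kernel. -/
def packedRoots : ℕ := positiveRoots.foldr (fun a n => n <<< 18 + a) 0

/-- The code of the `k`-th root up to sign: the root `k + 36` is opposite to the positive root
`k < 36`. -/
def rootCode (k : ℕ) : ℕ := (packedRoots >>> (18 * (k % 36))) % 2 ^ 18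

/-- Whether the `k`-th root is negative. -/
def isNeg (k : ℕ) : Bool := Nat.blt 35 k

/-- The code of the `k`-th root, modulo the least number for which the residue of the sum of two
roots tells whether this sum is zero, a root (and which one), or neither. -/
def rootKey (k : ℕ) : ℕ := bif isNeg k then 979 - rootCode k % 979 else rootCode k % 979

/-- The inverse of `rootKey`: the `s`-th byte is `k + 1` if the `k`-th root has key `s`, and `0` if
there is no such root. -/
def packedIndices : ℕ := (List.range 72).foldr (fun k n => n + (k + 1) <<< (8 * rootKey k)) 0

/-- One more than the index of the root with code congruent to `s`, or `0` if there is none. -/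
def succIndex (s : ℕ) : ℕ := (packedIndices >>> (8 * (s % 979))) % 2 ^ 8

/-- The parity of the sum of all `aᵢ bᵢ` and of the `aᵢ bⱼ` for edges `i < j` of the Dynkin
diagram; the latter join `i` to `i + 1` for `i = 2, 3, 4` and to `i + 2` for `i = 0, 1`. -/
def cocycle (a b : ℕ) : Bool :=
  let c := b &&& 0o111111
  let d := c ^^^ (0o001110 &&& c <<< 3) ^^^ (0o110000 &&& c <<< 6)
  Nat.beq ((0o111111 * (a &&& d)) >>> 15 % 2) 1

/-- The coefficient of a positive root on the `i`-th simple root. -/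
def digit (n i : ℕ) : ℤ := .ofNat ((n >>> (15 - 3 * i)) % 8)

/-- The sign `(-1)^b`. -/
def sign (b : Bool) : ℤ := bif b then -1 else 1

/-- The value of the `i`-th simple coroot on a positive root. -/
def corootValue (i n : ℕ) : ℤ :=
  2 * digit n i - match i with
    | 0 => digit n 2
    | 1 => digit n 3
    | 2 => digit n 0 + digit n 3
    | 3 => digit n 1 + (digit n 2 + digit n 4)
    | 4 => digit n 3 + digit n 5
    | _ => digit n 4

/-- The structure constants for the root vectors (`k < 72`) and simple coroots (`72 ≤ k < 78`),
with the signs of Frenkel and Kac. -/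
def sc (i j : ℕ) : SparseVector :=
  bif Nat.blt i 72 then
    bif Nat.blt j 72 then
      match (rootKey i + rootKey j) % 979 with
      | 0 => (List.range 6).foldr
          (fun k u => addSingle (sign (isNeg i) * digit (rootCode i) k) (72 + k) u) []
      | s => match succIndex s with
        | 0 => []
        | p + 1 => [(p, sign (cocycle (rootCode i) (rootCode j) ^^ isNeg i ^^ isNeg j ^^ isNeg p))]
    else bif Nat.blt j 78 then
      addSingle (-(sign (isNeg i) * corootValue (j - 72) (rootCode i))) i [] else []
  else bif Nat.blt i 78 && Nat.blt j 72 then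
    addSingle (sign (isNeg j) * corootValue (i - 72) (rootCode j)) j [] else []

/-- The indices of the Chevalley generators `eᵢ` and `fᵢ`. -/
def generators : List ℕ := List.range 6 ++ List.range' 36 6

set_option maxRecDepth 4000 in
lemma leibniz_check : (generators.all fun s => (List.range 78).all fun i => (List.range i).all
    fun j => (addSMul (-1) (linExtend (sc s) (sc i j)) (addSMul 1 (linExtend (fun k => sc k j)
      (sc s i)) (linExtend (sc i) (sc s j)))).isEmpty) = true := by
  decide +kernel

set_option maxRecDepth 4000 in
lemma skew_check : ((List.range 78).all fun i => (List.range 78).all fun j =>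
    (addSMul 1 (sc i j) (sc j i)).isEmpty) = true := by
  decide +kernel

set_option maxRecDepth 4000 in
lemma generators_check : ((List.range 78).all fun k => generators.contains k ||
    generators.any fun s => generators.contains s && (List.range k).any fun j =>
      sc s j == [(k, 1)] || sc s j == [(k, -1)]) = true := by
  decide +kernel

lemma sc_serre : ∀ i j : Fin 6,
    sc (72 + i) (72 + j) = [] ∧
    sc i (36 + j) = (if i = j then [(72 + i.1, 1)] else []) ∧
    sc (72 + i) j = addSingle (CartanMatrix.E₆ i j) j [] ∧
    sc (72 + i) (36 + j) = addSingle (-CartanMatrix.E₆ i j) (36 + j) [] ∧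
    (linExtend (sc i))^[(-CartanMatrix.E₆ i j).toNat] (sc i j) = [] ∧
    (linExtend (sc (36 + i)))^[(-CartanMatrix.E₆ i j).toNat] (sc (36 + i) (36 + j)) = [] := by
  decide +kernel

end E6

section LeibnizElements

variable {R V : Type*} [CommRing R] [AddCommGroup V] [Module R V]

/-- The elements `x` of an algebra with product `β` for which `β x` is a derivation. -/
def leibnizElements (β : V →ₗ[R] V →ₗ[R] V) : Submodule R V where
  carrier := {x | ∀ y z, β x (β y z) = β (β x y) z + β y (β x z)}
  add_mem' {x x'} hx hx' y z := by
    simp only [map_add, LinearMap.add_apply, hx y z, hx' y z]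
    abel
  zero_mem' y z := by simp
  smul_mem' c x hx y z := by simp only [map_smul, LinearMap.smul_apply, hx y z, smul_add]

lemma apply_apply_mem_leibnizElements {β : V →ₗ[R] V →ₗ[R] V} {x y : V}
    (hx : x ∈ leibnizElements β) (hy : y ∈ leibnizElements β) : β x y ∈ leibnizElements β := by
  have apply_commutator (w : V) : β (β x y) w = β x (β y w) - β y (β x w) :=
    eq_sub_of_add_eq (hx y w).symm
  intro z w
  simp only [apply_commutator, hy z w, hx z w, map_add, map_sub, LinearMap.sub_apply,
    hx (β y z) w, hx z (β y w), hy (β x z) w, hy z (β x w)]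
  abel

end LeibnizElements

namespace E6

open SparseVector

lemma sc_eq_nil {i j : ℕ} (h : 78 ≤ i ∨ 78 ≤ j) : sc i j = [] := by
  have hnot (k m : ℕ) (hk : k ≥ m) : Nat.blt k m = false := by
    rw [Bool.eq_false_iff, ne_eq, Nat.blt_eq]
    omega
  unfold sc
  rcases h with h | h
  · simp [hnot i 72 (by omega), hnot i 78 h]
  · simp [hnot j 72 (by omega), hnot j 78 h]

lemma mem_of_generators {V S : Type*} [AddCommGroup V] [SetLike S V] [AddSubgroupClass S V]
    {b : V → V → V} {B : ℕ → V} (hB : ∀ i j, b (B i) (B j) = combine B (sc i j)) {D : S}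
    (hgen : ∀ s ∈ generators, B s ∈ D) (hD : ∀ x ∈ D, ∀ y ∈ D, b x y ∈ D) {k : ℕ} (hk : k < 78) :
    B k ∈ D := by
  induction k using Nat.strong_induction_on with
  | _ k ih =>
    have hcheck := List.all_eq_true.1 generators_check k (List.mem_range.2 hk)
    simp only [Bool.or_eq_true, List.contains_iff_mem, List.any_eq_true, Bool.and_eq_true,
      List.mem_range, beq_iff_eq] at hcheck
    obtain hk | ⟨s, -, hs, j, hj, hsc⟩ := hcheck
    · exact hgen k hk
    have hmem := hD _ (hgen s hs) _ (ih j hj (hj.trans hk))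
    rw [hB] at hmem
    rcases hsc with hsc | hsc <;> simpa [hsc, combine] using hmem

/-- The underlying space of the Lie algebra with structure constants `E6.sc`. -/
def Model : Type := Fin 78 → ℂ

namespace Model

noncomputable instance : AddCommGroup Model := inferInstanceAs (AddCommGroup (Fin 78 → ℂ))

noncomputable instance : Module ℂ Model := inferInstanceAs (Module ℂ (Fin 78 → ℂ))

/-- The standard basis of the model. -/
noncomputable def basis : Module.Basis (Fin 78) ℂ Model := Pi.basisFun ℂ (Fin 78)

/-- The standard basis of the model, extended by zero to a family indexed by `ℕ`. -/
noncomputable def vector (k : ℕ) : Model := if hk : k < 78 then basis ⟨k, hk⟩ else 0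

lemma vector_of_le {k : ℕ} (hk : 78 ≤ k) : vector k = 0 := dif_neg hk.not_gt

lemma vector_val (k : Fin 78) : vector k = basis k := dif_pos k.2

/-- The bilinear product with structure constants `E6.sc`. -/
noncomputable def bracket : Model →ₗ[ℂ] Model →ₗ[ℂ] Model :=
  basis.constr ℂ fun i => basis.constr ℂ fun j => combine vector (sc i j)

lemma bracket_vector (i j : ℕ) : bracket (vector i) (vector j) = combine vector (sc i j) := by
  rcases lt_or_ge i 78 with hi | hi
  · rcases lt_or_ge j 78 with hj | hj
    · rw [vector_val ⟨i, hi⟩, vector_val ⟨j, hj⟩, bracket, Module.Basis.constr_basis,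
        Module.Basis.constr_basis]
    · rw [vector_of_le hj, sc_eq_nil (.inr hj), map_zero, combine]
  · rw [vector_of_le hi, sc_eq_nil (.inl hi), map_zero, LinearMap.zero_apply, combine]

lemma combine_eq_zero_of_isEmpty {u : SparseVector} (h : u.isEmpty = true) :
    combine vector u = 0 := by
  rw [List.isEmpty_iff.1 h, combine]

lemma bracket_combine (i : ℕ) (u : SparseVector) :
    bracket (vector i) (combine vector u) = combine vector (linExtend (sc i) u) :=
  (combine_linExtend _ _ (bracket (vector i)).toAddMonoidHom (bracket_vector i) u).symm

lemma combine_bracket (u : SparseVector) (j : ℕ) :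
    bracket (combine vector u) (vector j) = combine vector (linExtend (fun k => sc k j) u) :=
  (combine_linExtend _ _ (bracket.flip (vector j)).toAddMonoidHom
    (fun k => bracket_vector k j) u).symm

lemma bracket_skew (x y : Model) : bracket x y = -bracket y x := by
  suffices bracket = -bracket.flip from congr($this x y)
  refine LinearMap.ext_basis basis basis fun i j => eq_neg_of_add_eq_zero_left ?_
  have hcheck := List.all_eq_true.1 (List.all_eq_true.1 skew_check i (by simp)) j (by simp)
  have hzero := combine_eq_zero_of_isEmpty hcheck
  rwa [combine_addSMul, one_smul, ← bracket_vector, ← bracket_vector, vector_val,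
    vector_val] at hzero

instance : IsAddTorsionFree Model := inferInstanceAs (IsAddTorsionFree (Fin 78 → ℂ))

lemma bracket_self (x : Model) : bracket x x = 0 :=
  self_eq_neg.1 (bracket_skew x x)

lemma leibniz_generator {s : ℕ} (hs : s ∈ generators) : vector s ∈ leibnizElements bracket := by
  let β := bracket (vector s)
  have of_lt {i j : Fin 78} (hji : j < i) :
      β (bracket (basis i) (basis j)) =
        bracket (β (basis i)) (basis j) + bracket (basis i) (β (basis j)) := by
    have hcheck := List.all_eq_true.1 (List.all_eq_true.1
      (List.all_eq_true.1 leibniz_check s hs) i (by simp)) j (by simpa using hji)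
    have hzero := combine_eq_zero_of_isEmpty hcheck
    simp only [combine_addSMul, ← bracket_combine, ← combine_bracket, ← bracket_vector, one_smul,
      neg_smul, neg_add_eq_zero, vector_val] at hzero
    exact hzero
  suffices bracket.compr₂ β = bracket.comp β + bracket.compl₂ β from
    fun y z => congr($this y z)
  refine LinearMap.ext_basis basis basis fun i j => ?_
  simp only [LinearMap.compr₂_apply, LinearMap.add_apply, LinearMap.comp_apply,
    LinearMap.compl₂_apply]
  rcases lt_trichotomy j i with hji | rfl | hij
  · exact of_lt hji
  · rw [bracket_self, map_zero, bracket_skew (basis j), add_neg_cancel]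
  · rw [bracket_skew (basis i) (basis j), map_neg, of_lt hij, bracket_skew (β (basis i)),
      bracket_skew (basis i)]
    abel

lemma leibnizElements_bracket : leibnizElements bracket = ⊤ := by
  rw [eq_top_iff, ← basis.span_eq, Submodule.span_le, Set.range_subset_iff]
  intro k
  rw [← vector_val]
  exact mem_of_generators bracket_vector (fun s => leibniz_generator)
    (fun x hx y hy => apply_apply_mem_leibnizElements hx hy) k.2

noncomputable instance : LieRing Model where
  bracket x y := bracket x y
  add_lie x y z := by simp
  lie_add x y z := by simp
  lie_self := bracket_self
  leibniz_lie x y z := (leibnizElements_bracket.ge (Submodule.mem_top (x := x))) y z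

noncomputable instance : LieAlgebra ℂ Model where
  lie_smul c x y := map_smul (bracket x) c y

end Model

end E6

/-- A basis with the structure constants `E6.sc`, as the first 78 members of a sequence. -/
structure IsE6Basis {L : Type*} [LieRing L] [LieAlgebra ℂ L] (B : ℕ → L) : Prop where
  lie : ∀ i j, ⁅B i, B j⁆ = SparseVector.combine B (E6.sc i j)
  linearIndependent : LinearIndependent ℂ fun i : Fin 78 => B i
  span_eq_top : Submodule.span ℂ (Set.range fun i : Fin 78 => B i) = ⊤

namespace IsE6Basis

variable {L L' : Type*} [LieRing L] [LieAlgebra ℂ L] [LieRing L'] [LieAlgebra ℂ L'] {B : ℕ → L}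

lemma map (hB : IsE6Basis B) (σ : L ≃ₗ⁅ℂ⁆ L') : IsE6Basis fun i => σ (B i) where
  lie i j := by
    rw [← LieEquiv.map_lie, hB.lie]
    exact SparseVector.map_combine σ.toLinearEquiv.toAddMonoidHom B _
  linearIndependent := hB.linearIndependent.map' σ.toLinearEquiv.toLinearMap σ.toLinearEquiv.ker
  span_eq_top := by
    have := congr(Submodule.map (σ.toLinearEquiv : L →ₗ[ℂ] L') $hB.span_eq_top)
    rwa [Submodule.map_top, LinearEquiv.range, Submodule.map_span, ← Set.range_comp] at this

end IsE6Basis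

section Serre

open CartanMatrix CartanMatrix.Relations

/-- The universal property of the Lie algebra defined by the Serre relations. -/
lemma exists_lieHom_toLieAlgebra {R I M : Type*} [CommRing R] [DecidableEq I] {A : Matrix I I ℤ}
    [LieRing M] [LieAlgebra R M] {H E F : I → M} (hHH : ∀ i j, ⁅H i, H j⁆ = 0)
    (hEF : ∀ i j, ⁅E i, F j⁆ = if i = j then H i else 0) (hHE : ∀ i j, ⁅H i, E j⁆ = A i j • E j)
    (hHF : ∀ i j, ⁅H i, F j⁆ = -(A i j • F j))
    (hE : ∀ i j, (LieAlgebra.ad R M (E i) ^ (-A i j).toNat) ⁅E i, E j⁆ = 0)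
    (hF : ∀ i j, (LieAlgebra.ad R M (F i) ^ (-A i j).toNat) ⁅F i, F j⁆ = 0) :
    ∃ ψ : Matrix.ToLieAlgebra R A →ₗ⁅R⁆ M, ∀ i, E i ∈ ψ.range ∧ F i ∈ ψ.range := by
  let ρ : FreeLieAlgebra R (Generators I) →ₗ⁅R⁆ M := FreeLieAlgebra.lift R fun
    | .H i => H i
    | .E i => E i
    | .F i => F i
  have map_ad_pow (x y : FreeLieAlgebra R (Generators I)) (n : ℕ) :
      ρ ((LieAlgebra.ad R _ x ^ n) y) = (LieAlgebra.ad R M (ρ x) ^ n) (ρ y) := by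
    induction n with
    | zero => simp
    | succ n ih => simp [pow_succ', ih]
  have hρ : toIdeal R A ≤ ρ.ker := by
    refine LieSubmodule.lieSpan_le.2 fun x hx => ?_
    rw [SetLike.mem_coe, LieHom.mem_ker]
    simp only [toSet, Set.mem_union, Set.mem_range, Prod.exists, HH, EF, HE, HF, adE, adF,
      Function.uncurry_apply_pair, Function.comp_apply] at hx
    rcases hx with ((((⟨i, j, rfl⟩ | ⟨i, j, rfl⟩) | ⟨i, j, rfl⟩) | ⟨i, j, rfl⟩) | ⟨i, j, rfl⟩) |
      ⟨i, j, rfl⟩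
    · simp [ρ, hHH]
    · by_cases hij : i = j <;> simp [ρ, hij, hEF]
    · simp [ρ, hHE]
    · simp [ρ, hHF]
    · rw [map_ad_pow]
      simpa [ρ] using hE i j
    · rw [map_ad_pow]
      simpa [ρ] using hF i j
  let ψ : Matrix.ToLieAlgebra R A →ₗ⁅R⁆ M :=
    { (toIdeal R A).toSubmodule.liftQ
        (ρ : FreeLieAlgebra R (Generators I) →ₗ[R] M) (fun x hx => LieHom.mem_ker.1 (hρ hx)) with
      map_lie' := by
        intro x y
        obtain ⟨x, rfl⟩ := LieSubmodule.Quotient.surjective_mk' (toIdeal R A) x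
        obtain ⟨y, rfl⟩ := LieSubmodule.Quotient.surjective_mk' (toIdeal R A) y
        exact ρ.map_lie x y }
  have hψ (x : FreeLieAlgebra R (Generators I)) :
      ψ (LieSubmodule.Quotient.mk' (toIdeal R A) x) = ρ x := rfl
  exact ⟨ψ, fun i => ⟨⟨_, (hψ (.of R (.E i))).trans (by simp [ρ])⟩,
    ⟨_, (hψ (.of R (.F i))).trans (by simp [ρ])⟩⟩⟩

end Serre

namespace E6

open SparseVector

lemma Model.isE6Basis_vector : IsE6Basis Model.vector where
  lie := bracket_vector
  linearIndependent := by simpa only [vector_val] using basis.linearIndependent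
  span_eq_top := by simpa only [vector_val] using basis.span_eq

lemma Model.ad_pow_vector (i j n : ℕ) :
    (LieAlgebra.ad ℂ Model (vector i) ^ n) ⁅vector i, vector j⁆ =
      combine vector ((linExtend (sc i))^[n] (sc i j)) := by
  induction n with
  | zero => exact bracket_vector i j
  | succ n ih =>
    rw [pow_succ', Module.End.mul_apply, ih, Function.iterate_succ_apply']
    exact bracket_combine i _

lemma exists_lieHom_model :
    ∃ ψ : LieAlgebra.e₆ ℂ →ₗ⁅ℂ⁆ Model, Function.Surjective ψ := by
  have hlie := Model.isE6Basis_vector.lie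
  obtain ⟨ψ, hψ⟩ := exists_lieHom_toLieAlgebra (R := ℂ) (A := CartanMatrix.E₆)
    (H := fun i => Model.vector (72 + i)) (E := fun i => Model.vector i)
    (F := fun i => Model.vector (36 + i))
    (fun i j => by rw [hlie, (sc_serre i j).1, combine])
    (fun i j => by
      rw [hlie, (sc_serre i j).2.1]
      split_ifs <;> simp [combine])
    (fun i j => by rw [hlie, (sc_serre i j).2.2.1, combine_addSingle, combine, add_zero])
    (fun i j => by
      rw [hlie, (sc_serre i j).2.2.2.1, combine_addSingle, combine, add_zero, neg_smul])
    (fun i j => by rw [Model.ad_pow_vector, (sc_serre i j).2.2.2.2.1, combine])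
    (fun i j => by rw [Model.ad_pow_vector, (sc_serre i j).2.2.2.2.2, combine])
  have hgen : ∀ s ∈ generators, Model.vector s ∈ ψ.range := by
    intro s hs
    rcases List.mem_append.1 hs with hs | hs
    · exact (hψ ⟨s, List.mem_range.1 hs⟩).1
    · obtain ⟨i, hi, rfl⟩ := List.mem_range'.1 hs
      simpa using (hψ ⟨i, hi⟩).2
  refine ⟨ψ, (LieHom.range_eq_top ψ).1 ?_⟩
  rw [← LieSubalgebra.toSubmodule_inj, LieSubalgebra.top_toSubmodule, eq_top_iff,
    ← Model.isE6Basis_vector.span_eq_top, Submodule.span_le, Set.range_subset_iff]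
  exact fun k => mem_of_generators hlie hgen (fun x hx y hy => ψ.range.lie_mem hx hy) k.2

theorem exists_isE6Basis (L : Type*) [LieRing L] [LieAlgebra ℂ L] [LieAlgebra.IsSimple ℂ L]
    (htype : Nonempty (L ≃ₗ⁅ℂ⁆ LieAlgebra.e₆ ℂ)) : ∃ B : ℕ → L, IsE6Basis B := by
  obtain ⟨φ⟩ := htype
  obtain ⟨ψ, hψ⟩ := exists_lieHom_model
  let χ : L →ₗ⁅ℂ⁆ Model := ψ.comp φ.toLieHom
  have hχ : Function.Surjective χ := hψ.comp φ.surjective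
  have hker : χ.ker = ⊥ := by
    refine (LieAlgebra.IsSimple.eq_bot_or_eq_top χ.ker).resolve_right fun htop => ?_
    obtain ⟨x, hx⟩ := hχ (Model.vector 0)
    have hx' : χ x = 0 := LieHom.mem_ker.1 (htop ▸ LieSubmodule.mem_top x)
    exact Model.isE6Basis_vector.linearIndependent.ne_zero (0 : Fin 78) (hx.symm.trans hx')
  exact ⟨_, Model.isE6Basis_vector.map
    (LieEquiv.ofBijective χ ⟨(LieHom.ker_eq_bot χ).1 hker, hχ⟩).symm⟩

end E6

/-! ### Representations of sl₂ -/

section Sl2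

open Module.End LieModule

variable {K L V : Type*} [Field K] [LieRing L] [LieAlgebra K L] [AddCommGroup V]
  [Module K V] [LieRingModule L V] [LieModule K L V] {h e f : L}

lemma lie_lie_h_e (t : IsSl2Triple h e f) (w : V) :
    ⁅e, ⁅h, w⁆⁆ = ⁅h, ⁅e, w⁆⁆ - (2 : K) • ⁅e, w⁆ := by
  rw [leibniz_lie, ← lie_skew, t.lie_h_e_smul K, neg_lie, smul_lie]
  abel

lemma lie_h_f_eq_smul (t : IsSl2Triple h e f) : ⁅h, f⁆ = (-2 : K) • f := by
  rw [neg_smul, t.lie_lie_smul_f K]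

lemma pow_toEnd_e_lie_f (t : IsSl2Triple h e f) (n : ℕ) (w : V) :
    (toEnd K L V e ^ (n + 1)) ⁅f, w⁆ = ⁅f, (toEnd K L V e ^ (n + 1)) w⁆ +
      (n + 1 : K) • (⁅h, (toEnd K L V e ^ n) w⁆ - (n : K) • (toEnd K L V e ^ n) w) := by
  induction n with
  | zero => simp [leibniz_lie e f w, t.lie_e_f, add_comm]
  | succ n ih =>
    rw [pow_succ' _ (n + 1), Module.End.mul_apply, Module.End.mul_apply, ih, pow_succ' _ n,
      Module.End.mul_apply]
    simp only [toEnd_apply_apply, lie_add, lie_smul, lie_sub, lie_lie_h_e (K := K) t,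
      leibniz_lie e f, t.lie_e_f]
    push_cast
    module

lemma mem_maxGenEigenspace_neg {x : L} {μ : K} {w : V} :
    w ∈ (toEnd K L V (-x)).maxGenEigenspace (-μ) ↔ w ∈ (toEnd K L V x).maxGenEigenspace μ := by
  have : toEnd K L V (-x) - (-μ) • 1 = -(toEnd K L V x - μ • 1) := by
    rw [map_neg]
    module
  simp only [mem_maxGenEigenspace, this]
  refine exists_congr fun n => ?_
  rcases n.even_or_odd with hn | hn <;> simp only [hn.neg_pow, LinearMap.neg_apply, neg_eq_zero]

lemma pow_toEnd_mem_maxGenEigenspace {x : L} {c μ : K} (hx : ⁅h, x⁆ = c • x) {w : V}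
    (hw : w ∈ (toEnd K L V h).maxGenEigenspace μ) (n : ℕ) :
    (toEnd K L V x ^ n) w ∈ (toEnd K L V h).maxGenEigenspace (μ + n * c) := by
  have hx' : x ∈ (toEnd K L L h).maxGenEigenspace c :=
    genEigenspace_le_maximal _ _ 1 (mem_genEigenspace_one.2 hx)
  induction n with
  | zero => simpa using hw
  | succ n ih =>
    rw [pow_succ', Module.End.mul_apply, toEnd_apply_apply]
    convert lie_mem_maxGenEigenspace_toEnd hx' ih using 2
    push_cast
    ring

lemma lie_pow_toEnd {x : L} {c : K} (hx : ⁅h, x⁆ = c • x) (n : ℕ) (w : V) :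
    ⁅h, (toEnd K L V x ^ n) w⁆ = (toEnd K L V x ^ n) (⁅h, w⁆ + (n * c) • w) := by
  induction n with
  | zero => simp
  | succ n ih =>
    rw [pow_succ', Module.End.mul_apply, Module.End.mul_apply, toEnd_apply_apply, leibniz_lie, ih,
      hx, smul_lie, ← toEnd_apply_apply K L V x, ← toEnd_apply_apply K L V x, ← map_smul,
      ← map_add, ← map_smul, ← map_add]
    push_cast
    congr 2
    module

lemma eq_of_mem_maxGenEigenspace {φ : Module.End K V} {μ ν : K} {w : V}
    (hμ : w ∈ φ.maxGenEigenspace μ) (hν : w ∈ φ.maxGenEigenspace ν) (hw : w ≠ 0) : μ = ν := by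
  by_contra hne
  exact hw (Submodule.disjoint_def.1 (φ.independent_maxGenEigenspace.pairwiseDisjoint hne) w hμ hν)

variable [CharZero K] [FiniteDimensional K V]

lemma exists_pow_toEnd_eq_zero {x : L} {c μ : K} (hc : c ≠ 0) (hx : ⁅h, x⁆ = c • x) {w : V}
    (hw : w ∈ (toEnd K L V h).maxGenEigenspace μ) : ∃ n, (toEnd K L V x ^ n) w = 0 := by
  by_contra! hne
  have hinj : Function.Injective fun n : ℕ => μ + n * c := fun a b hab => by simpa [hc] using hab
  refine Set.infinite_of_injective_forall_mem hinj (fun n => ?_)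
    (toEnd K L V h).finite_hasEigenvalue
  have hn := pow_toEnd_mem_maxGenEigenspace hx hw n
  refine (hasUnifEigenvalue_iff_hasUnifEigenvalue_one (k := ⊤) (by simp)).1 fun hbot => hne n ?_
  rwa [maxGenEigenspace, hbot, Submodule.mem_bot] at hn

lemma exists_nat_of_lie_e_lie_f_eq_zero (t : IsSl2Triple h e f) {μ : K} {w : V} (hw : w ≠ 0)
    (hμ : w ∈ (toEnd K L V h).maxGenEigenspace μ) (hef : ⁅e, ⁅f, w⁆⁆ = 0) :
    ∃ k : ℕ, μ = -k ∧ (toEnd K L V e ^ k) w ≠ 0 ∧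
      ⁅h, (toEnd K L V e ^ k) w⁆ = (k : K) • (toEnd K L V e ^ k) w := by
  classical
  have hex := exists_pow_toEnd_eq_zero two_ne_zero (t.lie_h_e_smul K) hμ
  obtain ⟨k, hk⟩ := Nat.exists_eq_succ_of_ne_zero (n := Nat.find hex) fun h0 =>
    hw (by simpa [h0] using Nat.find_spec hex)
  have hne : (toEnd K L V e ^ k) w ≠ 0 := Nat.find_min hex (by omega)
  have hzero : (toEnd K L V e ^ (k + 1)) w = 0 :=
    Nat.succ_eq_add_one k ▸ hk ▸ Nat.find_spec hex
  have heig : ⁅h, (toEnd K L V e ^ k) w⁆ = (k : K) • (toEnd K L V e ^ k) w := by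
    have hcomm := pow_toEnd_e_lie_f (K := K) t k w
    rw [hzero, lie_zero, zero_add, pow_succ, Module.End.mul_apply, toEnd_apply_apply, hef, map_zero,
      eq_comm, smul_eq_zero] at hcomm
    exact sub_eq_zero.1 (hcomm.resolve_left (by exact_mod_cast k.succ_ne_zero))
  have hval := eq_of_mem_maxGenEigenspace
    (pow_toEnd_mem_maxGenEigenspace (t.lie_h_e_smul K) hμ k)
    (genEigenspace_le_maximal _ _ 1 (mem_genEigenspace_one.2 heig)) hne
  exact ⟨k, by linear_combination hval, hne, heig⟩

lemma exists_nat_of_lie_e_eq_zero (t : IsSl2Triple h e f) {μ : K} {w : V} (hw : w ≠ 0)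
    (hμ : w ∈ (toEnd K L V h).maxGenEigenspace μ) (he : ⁅e, w⁆ = 0) :
    ∃ k : ℕ, μ = k ∧ (toEnd K L V f ^ k) w ≠ 0 ∧
      ⁅h, (toEnd K L V f ^ k) w⁆ = -(k : K) • (toEnd K L V f ^ k) w := by
  obtain ⟨k, hk, hne, heig⟩ := exists_nat_of_lie_e_lie_f_eq_zero t.symm hw
    (mem_maxGenEigenspace_neg.2 hμ) (by rw [he, lie_zero])
  exact ⟨k, neg_injective hk, hne, by rw [neg_smul, ← heig, neg_lie, neg_neg]⟩

lemma lie_h_eq_smul_of_lie_e_eq_zero (t : IsSl2Triple h e f) {μ : K} {w : V}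
    (hμ : w ∈ (toEnd K L V h).maxGenEigenspace μ) (he : ⁅e, w⁆ = 0) : ⁅h, w⁆ = μ • w := by
  by_contra hne
  have hw : w ≠ 0 := by
    rintro rfl
    simp at hne
  let u : V := ⁅h, w⁆ - μ • w
  have hu : u ∈ (toEnd K L V h).maxGenEigenspace μ :=
    sub_mem (mapsTo_maxGenEigenspace_of_comm (Commute.refl _) μ hμ) (Submodule.smul_mem _ _ hμ)
  have heu : ⁅e, u⁆ = 0 := by simp [u, lie_lie_h_e (K := K) t, he]
  obtain ⟨k, rfl, -, heig⟩ := exists_nat_of_lie_e_eq_zero t hw hμ he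
  obtain ⟨k', hk', hnu, -⟩ := exists_nat_of_lie_e_eq_zero t (sub_ne_zero.2 hne) hu heu
  obtain rfl := Nat.cast_injective hk'
  refine hnu ?_
  have hcomm := lie_pow_toEnd (lie_h_f_eq_smul (K := K) t) k w
  rw [heig, eq_comm, ← sub_eq_zero, ← map_smul, ← map_sub] at hcomm
  convert hcomm using 2
  module

variable (K V)

lemma isNilpotent_toEnd [IsAlgClosed K] {x : L} {c : K} (hc : c ≠ 0) (hx : ⁅h, x⁆ = c • x) :
    IsNilpotent (toEnd K L V x) := by
  rw [Module.End.isNilpotent_iff_of_finite]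
  intro w
  suffices ⊤ ≤ (toEnd K L V x).maxGenEigenspace 0 by simpa using this (Submodule.mem_top (x := w))
  rw [← iSup_maxGenEigenspace_eq_top (toEnd K L V h)]
  refine iSup_le fun μ w hw => ?_
  simpa using exists_pow_toEnd_eq_zero hc hx hw

lemma disjoint_ker_e_range_f [IsAlgClosed K] (t : IsSl2Triple h e f) :
    Disjoint (toEnd K L V e).ker (toEnd K L V f).range := by
  let p := (toEnd K L V e * toEnd K L V f).ker
  have hp : ∀ w ∈ p, toEnd K L V h w ∈ p := by
    intro w hw
    have hw' : ⁅e, ⁅f, w⁆⁆ = 0 := hw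
    change ⁅e, ⁅f, ⁅h, w⁆⁆⁆ = 0
    have hf : ⁅h, ⁅f, w⁆⁆ = ⁅f, ⁅h, w⁆⁆ + (-2 : K) • ⁅f, w⁆ := by
      rw [leibniz_lie, lie_h_f_eq_smul (K := K) t, smul_lie, add_comm]
    simp [eq_sub_of_add_eq hf.symm, lie_lie_h_e (K := K) t, hw']
  have hker (μ : K) : p ⊓ (toEnd K L V h).maxGenEigenspace μ ≤ (toEnd K L V f).ker := by
    rintro w ⟨hw, hμ⟩
    by_contra hfw
    obtain ⟨k, rfl, -⟩ := exists_nat_of_lie_e_lie_f_eq_zero t (by rintro rfl; simp at hfw) hμ hw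
    obtain ⟨k', hk', -⟩ := exists_nat_of_lie_e_eq_zero t hfw
      (by simpa using pow_toEnd_mem_maxGenEigenspace (lie_h_f_eq_smul t) hμ 1) hw
    have : ((-k - 2 : ℤ) : K) = (k' : ℤ) := by
      push_cast
      linear_combination hk'
    have := Int.cast_injective this
    omega
  have hple : p ≤ (toEnd K L V f).ker := by
    have hsup := Submodule.inf_iSup_genEigenspace hp ⊤
    rw [show ⨆ μ, (toEnd K L V h).genEigenspace μ ⊤ = ⊤ from
      iSup_maxGenEigenspace_eq_top _, inf_top_eq] at hsup
    exact hsup.le.trans (iSup_le hker)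
  rw [Submodule.disjoint_def]
  rintro _ hx ⟨w, rfl⟩
  exact hple hx

lemma ker_e_sup_range_f_eq_top [IsAlgClosed K] (t : IsSl2Triple h e f) :
    (toEnd K L V e).ker ⊔ (toEnd K L V f).range = ⊤ := by
  apply Submodule.eq_top_of_finrank_eq
  have hsup := Submodule.finrank_sup_add_finrank_inf_eq (toEnd K L V e).ker (toEnd K L V f).range
  have hsup' := Submodule.finrank_sup_add_finrank_inf_eq (toEnd K L V f).ker (toEnd K L V e).range
  rw [(disjoint_ker_e_range_f K V t).eq_bot, finrank_bot] at hsup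
  rw [(disjoint_ker_e_range_f K V t.symm).eq_bot, finrank_bot] at hsup'
  have he := (toEnd K L V e).finrank_range_add_finrank_ker
  have hf := (toEnd K L V f).finrank_range_add_finrank_ker
  have hle := Submodule.finrank_le ((toEnd K L V e).ker ⊔ (toEnd K L V f).range)
  have hle' := Submodule.finrank_le ((toEnd K L V f).ker ⊔ (toEnd K L V e).range)
  omega

lemma ker_e_eq_iSup_inf_eigenspace [IsAlgClosed K] (t : IsSl2Triple h e f) :
    (toEnd K L V e).ker =
      ⨆ n : ℕ, (toEnd K L V e).ker ⊓ (toEnd K L V h).eigenspace (n : K) := by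
  refine le_antisymm ?_ (iSup_le fun n => inf_le_left)
  have hst : ∀ w ∈ (toEnd K L V e).ker, toEnd K L V h w ∈ (toEnd K L V e).ker := by
    intro w hw
    have hw' : ⁅e, w⁆ = 0 := hw
    change ⁅e, ⁅h, w⁆⁆ = 0
    simp [lie_lie_h_e (K := K) t, hw']
  have hsup := Submodule.inf_iSup_genEigenspace hst ⊤
  rw [show ⨆ μ, (toEnd K L V h).genEigenspace μ ⊤ = ⊤ from
    iSup_maxGenEigenspace_eq_top _, inf_top_eq] at hsup
  refine hsup.le.trans (iSup_le fun μ w hw => ?_)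
  by_cases hw0 : w = 0
  · simp [hw0]
  obtain ⟨n, rfl, -⟩ := exists_nat_of_lie_e_eq_zero t hw0 hw.2 hw.1
  exact Submodule.mem_iSup_of_mem n
    ⟨hw.1, mem_eigenspace_iff.2 (lie_h_eq_smul_of_lie_e_eq_zero t hw.2 hw.1)⟩

theorem iSup_eigenspace_h_eq_top [IsAlgClosed K] (t : IsSl2Triple h e f) :
    ⨆ n : ℤ, (toEnd K L V h).eigenspace (n : K) = ⊤ := by
  set W := ⨆ n : ℤ, (toEnd K L V h).eigenspace (n : K) with hW
  have hker : (toEnd K L V e).ker ≤ W := by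
    rw [ker_e_eq_iSup_inf_eigenspace K V t]
    exact iSup_le fun n => inf_le_right.trans (le_iSup_of_le (n : ℤ) (by simp))
  have hfW : W.map (toEnd K L V f) ≤ W := by
    rw [hW, Submodule.map_iSup]
    refine iSup_le fun n => le_iSup_of_le (n - 2) ?_
    rintro _ ⟨w, hw, rfl⟩
    have hw' : ⁅h, w⁆ = (n : K) • w := mem_eigenspace_iff.1 hw
    rw [mem_eigenspace_iff]
    simp only [toEnd_apply_apply, leibniz_lie h f, lie_h_f_eq_smul (K := K) t, hw', smul_lie,
      lie_smul]
    push_cast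
    module
  have hsup (n : ℕ) : W ⊔ (toEnd K L V f ^ n).range = ⊤ := by
    induction n with
    | zero => simp [Module.End.one_eq_id]
    | succ n ih =>
      rw [eq_top_iff, ← ker_e_sup_range_f_eq_top K V t, ← Submodule.map_top, ← ih,
        Submodule.map_sup, pow_succ', Module.End.mul_eq_comp, LinearMap.range_comp]
      exact sup_le (hker.trans le_sup_left) (sup_le_sup_right hfW _)
  obtain ⟨n, hn⟩ := isNilpotent_toEnd K V (neg_ne_zero.2 two_ne_zero) (lie_h_f_eq_smul (K := K) t)
  simpa [hn] using hsup n

end Sl2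

/-! ### Inner automorphisms -/

section Exp

open NormedSpace Filter Topology

variable {𝕜 V : Type*} [RCLike 𝕜] [NormedAddCommGroup V] [NormedSpace 𝕜 V] [CompleteSpace V]

lemma exp_mul_exp_neg (D : V →L[𝕜] V) : exp D * exp (-D) = 1 := by
  let : NormedAlgebra ℚ 𝕜 := inferInstance
  let := NormedAlgebra.restrictScalars ℚ 𝕜 (V →L[𝕜] V)
  rw [← exp_add_of_commute (Commute.neg_right (Commute.refl _)), add_neg_cancel, exp_zero]

lemma exp_apply_apply_of_derivation {D : V →L[𝕜] V} {β : V →L[𝕜] V →L[𝕜] V}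
    (hD : ∀ a b, D (β a b) = β (D a) b + β a (D b)) (a b : V) :
    exp D (β a b) = β (exp D a) (exp D b) := by
  have hasDerivAt_exp (c : V) (s : 𝕜) :
      HasDerivAt (fun s : 𝕜 => exp (s • D) c) (D (exp (s • D) c)) s :=
    ((hasDerivAt_exp_smul_const' (𝕂 := 𝕜) D s).clm_apply (hasDerivAt_const s c)).congr_deriv
      (by simp)
  have hasDerivAt_conj (s : 𝕜) :
      HasDerivAt (fun s : 𝕜 => exp (-s • D) (β (exp (s • D) a) (exp (s • D) b))) 0 s := by
    have hβ := (β.hasFDerivAt (x := exp (s • D) a)).comp_hasDerivAt s (hasDerivAt_exp a s)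
    have hββ := hβ.clm_apply (hasDerivAt_exp b s)
    have hneg := (hasDerivAt_exp_smul_const (𝕂 := 𝕜) D (-s)).scomp s (hasDerivAt_neg s)
    refine (hneg.clm_apply hββ).congr_deriv ?_
    simp only [Function.comp_apply, hD, neg_smul, one_smul, neg_apply, mul_apply_eq_comp, map_add]
    abel
  have hconst := is_const_of_deriv_eq_zero (fun s => (hasDerivAt_conj s).differentiableAt)
    (fun s => (hasDerivAt_conj s).deriv) 1 0
  simp only [one_smul, neg_zero, zero_smul, exp_zero, one_apply_eq_self] at hconst
  rw [← hconst, ← mul_apply_eq_comp, neg_smul, one_smul, exp_mul_exp_neg, one_apply_eq_self]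

/-- The inverse function theorem at `(0, 0)` for `(y, t) ↦ exp (β y) (x + t)`. -/
lemma eventually_exists_exp_apply_eq {β : V →L[𝕜] V →L[𝕜] V} {S N : Submodule 𝕜 V}
    [CompleteSpace S] [CompleteSpace N] {x : V} (h : ∀ z, ∃ y ∈ S, ∃ t ∈ N, β y x + t = z) :
    ∀ᶠ x' in 𝓝 x, ∃ y ∈ S, ∃ t ∈ N, exp (β y) (x + t) = x' := by
  let A : S × N →L[𝕜] V →L[𝕜] V := β.comp (S.subtypeL.comp (.fst 𝕜 S N))
  have hexp : HasStrictFDerivAt (fun p => exp (A p)) A 0 := by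
    have := hasStrictFDerivAt_exp_zero (𝕂 := 𝕜) (𝔸 := V →L[𝕜] V)
    rw [← map_zero A] at this
    exact this.comp 0 A.hasStrictFDerivAt
  let T : S × N →L[𝕜] V := N.subtypeL.comp (.snd 𝕜 S N)
  have hnhds := (hexp.clm_apply (T.hasStrictFDerivAt.const_add x)).map_nhds_eq_of_surj (by
    rw [LinearMap.range_eq_top]
    intro z
    obtain ⟨y, hy, t, ht, rfl⟩ := h z
    exact ⟨(⟨y, hy⟩, ⟨t, ht⟩), by simp [A, T, add_comm]⟩)
  simp only [map_zero, exp_zero, one_apply_eq_self, add_zero] at hnhds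
  rw [← hnhds, eventually_map]
  exact .of_forall fun p => ⟨p.1, p.1.2, p.2, p.2.2, rfl⟩

end Exp

section ExpAd

open Module NormedSpace Filter Topology

variable {L : Type*} [LieRing L] [LieAlgebra ℂ L] [FiniteDimensional ℂ L]

variable (L) in
/-- The coordinates with respect to some basis, used to topologize a Lie algebra. -/
noncomputable abbrev coord : L ≃ₗ[ℂ] (Fin (finrank ℂ L) → ℂ) := (finBasis ℂ L).equivFun

variable (L) in
/-- The Lie bracket in coordinates, as a continuous bilinear map. -/
noncomputable def coordBracket : (Fin (finrank ℂ L) → ℂ) →L[ℂ] (Fin (finrank ℂ L) → ℂ) →L[ℂ]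
    (Fin (finrank ℂ L) → ℂ) :=
  LinearMap.toContinuousLinearMap <| LinearMap.toContinuousLinearMap.toLinearMap ∘ₗ
    ((coord L).conj : Module.End ℂ L ≃ₗ[ℂ] _).toLinearMap ∘ₗ
      (LieModule.toEnd ℂ L L : L →ₗ[ℂ] Module.End ℂ L) ∘ₗ (coord L).symm.toLinearMap

lemma coordBracket_coord (a b : L) :
    coordBracket L (coord L a) (coord L b) = coord L ⁅a, b⁆ := by
  simp [coordBracket, LinearEquiv.conj_apply]

lemma coordBracket_pow_coord (y w : L) (n : ℕ) :
    (coordBracket L (coord L y) ^ n) (coord L w) = coord L ((LieAlgebra.ad ℂ L y ^ n) w) := by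
  induction n with
  | zero => simp
  | succ n ih => rw [pow_succ', mul_apply_eq_comp, ih, coordBracket_coord, pow_succ']; rfl

lemma exp_coordBracket (y : L) (v w : Fin (finrank ℂ L) → ℂ) :
    exp (coordBracket L (coord L y)) (coordBracket L v w) =
      coordBracket L (exp (coordBracket L (coord L y)) v) (exp (coordBracket L (coord L y)) w) := by
  refine exp_apply_apply_of_derivation (fun v w => ?_) v w
  obtain ⟨a, rfl⟩ := (coord L).surjective v
  obtain ⟨b, rfl⟩ := (coord L).surjective w
  simp only [coordBracket_coord, ← map_add]
  rw [leibniz_lie]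

/-- The automorphism `exp (ad y)`. -/
noncomputable def expAd (y : L) : L ≃ₗ⁅ℂ⁆ L where
  toFun w := (coord L).symm (exp (coordBracket L (coord L y)) (coord L w))
  map_add' a b := by simp only [map_add]
  map_smul' c a := by simp only [map_smul, RingHom.id_apply]
  map_lie' {a b} := by
    apply (coord L).injective
    simp only [← coordBracket_coord, LinearEquiv.apply_symm_apply, exp_coordBracket]
  invFun w := (coord L).symm (exp (-coordBracket L (coord L y)) (coord L w))
  left_inv w := by
    have h := exp_mul_exp_neg (-coordBracket L (coord L y))
    rw [neg_neg] at h
    beta_reduce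
    rw [LinearEquiv.apply_symm_apply, ← mul_apply_eq_comp, h, one_apply_eq_self,
      LinearEquiv.symm_apply_apply]
  right_inv w := by
    beta_reduce
    rw [LinearEquiv.apply_symm_apply, ← mul_apply_eq_comp, exp_mul_exp_neg, one_apply_eq_self,
      LinearEquiv.symm_apply_apply]

lemma coord_expAd (y w : L) :
    coord L (expAd y w) = exp (coordBracket L (coord L y)) (coord L w) :=
  (coord L).apply_symm_apply _

lemma expAd_of_lie_lie_lie_eq_zero {y w : L} (h : ⁅y, ⁅y, ⁅y, w⁆⁆⁆ = 0) :
    expAd y w = w + ⁅y, w⁆ + (1 / 2 : ℂ) • ⁅y, ⁅y, w⁆⁆ := by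
  have hsum := (exp_series_hasSum_exp' (𝕂 := ℂ) (coordBracket L (coord L y))).mapL
    (ContinuousLinearMap.apply ℂ _ (coord L w))
  simp only [ContinuousLinearMap.apply_apply, smul_apply, coordBracket_pow_coord,
    ← coord_expAd] at hsum
  have hzero (n : ℕ) (hn : n ∉ Finset.range 3) :
      (n.factorial⁻¹ : ℂ) • coord L ((LieAlgebra.ad ℂ L y ^ n) w) = 0 := by
    obtain ⟨m, rfl⟩ := Nat.exists_eq_add_of_le' (by simpa using hn : 3 ≤ n)
    have : (LieAlgebra.ad ℂ L y ^ 3) w = 0 := h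
    rw [pow_add, Module.End.mul_apply, this, map_zero, map_zero, smul_zero]
  have hfin := hsum.unique (hasSum_sum_of_ne_finset_zero hzero)
  apply (coord L).injective
  rw [hfin]
  simp only [← map_smul (coord L), ← map_sum]
  simp [Finset.sum_range_succ, pow_succ]

lemma expAd_of_lie_eq_zero {y w : L} (h : ⁅y, w⁆ = 0) : expAd y w = w := by
  simp [expAd_of_lie_lie_lie_eq_zero, h]

lemma eventually_exists_expAd_eq {S N : Submodule ℂ L} {x : L}
    (h : ∀ z, ∃ y ∈ S, ∃ t ∈ N, ⁅y, x⁆ + t = z) (z : L) :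
    ∀ᶠ s : ℂ in 𝓝 0, ∃ y ∈ S, ∃ t ∈ N, expAd y (x + t) = x + s • z := by
  have hexp := eventually_exists_exp_apply_eq (β := coordBracket L) (x := coord L x)
    (S := S.map (coord L).toLinearMap) (N := N.map (coord L).toLinearMap) (by
      intro z
      obtain ⟨y, hy, t, ht, hz⟩ := h ((coord L).symm z)
      refine ⟨_, Submodule.mem_map_of_mem hy, _, Submodule.mem_map_of_mem ht, ?_⟩
      simp only [LinearEquiv.coe_coe, coordBracket_coord, ← map_add, hz,
        LinearEquiv.apply_symm_apply])
  have hcont : Tendsto (fun s : ℂ => coord L x + s • coord L z) (𝓝 0) (𝓝 (coord L x)) :=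
    Continuous.tendsto' (by fun_prop) _ _ (by simp)
  filter_upwards [hcont.eventually hexp] with s hs
  obtain ⟨_, ⟨y, hy, rfl⟩, _, ⟨t, ht, rfl⟩, heq⟩ := hs
  refine ⟨y, hy, t, ht, (coord L).injective ?_⟩
  simpa only [coord_expAd, map_add, map_smul, LinearEquiv.coe_coe] using heq

/-- Transport along the line through `x` and `y`, the complement of a finite set in `ℂ` being
connected. -/
lemma rel_of_eventually_rel {V : Type*} [AddCommGroup V] [Module ℂ V] {R : Set V}
    {P : V → V → Prop} (htrans : ∀ {u v w}, P u v → P v w → P u w) (hsymm : ∀ {u v}, P u v → P v u)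
    {x y : V} (hx : x ∈ R) (hy : y ∈ R) (hfin : {s : ℂ | x + s • (y - x) ∉ R}.Finite)
    (hloc : ∀ u ∈ R, ∀ᶠ s : ℂ in 𝓝 0, u + s • (y - x) ∈ R → P u (u + s • (y - x))) : P x y := by
  let γ : ℂ → V := fun s => x + s • (y - x)
  have hconn : IsPreconnected (γ ⁻¹' R) := by
    have := (hfin.countable.isPathConnected_compl_of_one_lt_rank (E := ℂ) (by
      rw [Complex.rank_real_complex]
      exact Nat.one_lt_ofNat)).isConnected.isPreconnected
    convert this using 1
    ext s
    simp [γ]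
  have hγ := hconn.induction₂ (fun s s' => P (γ s) (γ s')) (fun s hs => ?_)
    (fun _ _ _ _ _ _ => htrans) (fun _ _ _ _ => hsymm) (x := 0) (y := 1)
    (by simpa [γ]) (by simpa [γ])
  · simpa [γ] using hγ
  · have hsub : Tendsto (fun s' => s' - s) (𝓝 s) (𝓝 0) :=
      Continuous.tendsto' (by fun_prop) _ _ (by simp)
    filter_upwards [nhdsWithin_le_nhds (hsub.eventually (hloc _ hs)), self_mem_nhdsWithin]
      with s' hs' hmem
    have heq : γ s + (s' - s) • (y - x) = γ s' := by
      simp only [γ]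
      module
    rw [heq] at hs'
    exact hs' hmem

end ExpAd

section CartanConjugacy

open Module LieAlgebra LieSubalgebra Filter Topology

attribute [local instance] LieRing.ofAssociativeRing LieAlgebra.ofAssociativeAlgebra

variable {L : Type*} [LieRing L] [LieAlgebra ℂ L]

lemma ad_pow_apply_equiv (σ : L ≃ₗ⁅ℂ⁆ L) (x w : L) (n : ℕ) :
    (ad ℂ L (σ x) ^ n) (σ w) = σ ((ad ℂ L x ^ n) w) := by
  induction n with
  | zero => rfl
  | succ n ih => simp only [pow_succ', Module.End.mul_apply, ih, ad_apply, LieEquiv.map_lie]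

lemma apply_mem_engel_apply_iff (σ : L ≃ₗ⁅ℂ⁆ L) {x w : L} :
    σ w ∈ engel ℂ (σ x) ↔ w ∈ engel ℂ x := by
  simp only [mem_engel_iff, ad_pow_apply_equiv, map_eq_zero_iff σ σ.injective]

variable [FiniteDimensional ℂ L]

lemma exists_lie_add_mem_engel (x z : L) :
    ∃ y ∈ (⊤ : Submodule ℂ L), ∃ t ∈ (engel ℂ x).toSubmodule, ⁅y, x⁆ + t = z := by
  obtain ⟨n, hn⟩ := eventually_atTop.mp (ad ℂ L x).eventually_codisjoint_ker_pow_range_pow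
  have htop := (hn (n + 1) n.le_succ).eq_top
  obtain ⟨t, ht, _, ⟨w, rfl⟩, rfl⟩ := Submodule.mem_sup.mp (htop ▸ Submodule.mem_top (x := z))
  refine ⟨-((ad ℂ L x ^ n) w), Submodule.mem_top, t, (mem_engel_iff ℂ x t).mpr ⟨n + 1, ht⟩, ?_⟩
  rw [neg_lie, lie_skew, pow_succ', Module.End.mul_apply, ad_apply, add_comm]

lemma eventually_exists_mem_engel_expAd_eq (x z : L) :
    ∀ᶠ s : ℂ in 𝓝 0, ∃ y, ∃ t ∈ engel ℂ x, expAd y t = x + s • z := by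
  filter_upwards [eventually_exists_expAd_eq (exists_lie_add_mem_engel x) z] with s hs
  obtain ⟨y, -, t, ht, heq⟩ := hs
  exact ⟨y, x + t, add_mem (self_mem_engel ℂ x) ht, heq⟩

lemma isRegular_apply_iff (σ : L ≃ₗ⁅ℂ⁆ L) {x : L} : IsRegular ℂ (σ x) ↔ IsRegular ℂ x := by
  have hmap : (engel ℂ x).toSubmodule.map σ.toLinearEquiv.toLinearMap =
      (engel ℂ (σ x)).toSubmodule := by
    ext w
    constructor
    · rintro ⟨u, hu, rfl⟩
      exact (apply_mem_engel_apply_iff σ).mpr hu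
    · intro hw
      refine ⟨σ.symm w, (apply_mem_engel_apply_iff σ).mp ?_, σ.apply_symm_apply w⟩
      rwa [LieEquiv.apply_symm_apply]
  rw [isRegular_iff_finrank_engel_eq_rank, isRegular_iff_finrank_engel_eq_rank]
  exact Eq.congr_left ((congrArg (fun p : Submodule ℂ L => finrank ℂ p) hmap).symm.trans
    (LinearEquiv.finrank_map_eq σ.toLinearEquiv _))

lemma engel_eq_of_isRegular {x t : L} (hx : IsRegular ℂ x) (ht : IsRegular ℂ t)
    (h : t ∈ engel ℂ x) : engel ℂ x = engel ℂ t := by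
  rw [isRegular_iff_finrank_engel_eq_rank] at hx ht
  let Ex : {engel ℂ z | z ∈ engel ℂ x} := ⟨engel ℂ x, x, self_mem_engel _ _, rfl⟩
  have hmin : IsMin Ex := by
    rintro ⟨_, y, hy, rfl⟩ hyx
    exact (toSubmodule_injective (Submodule.eq_of_le_of_finrank_le hyx
      (hx.trans_le (rank_le_finrank_engel ℂ y)))).ge
  have hbot : IsBot Ex := engel_isBot_of_isMin
    (Cardinal.natCast_le_aleph0.trans (Cardinal.infinite_iff.mp inferInstance)) _ Ex le_rfl hmin
  exact toSubmodule_injective (Submodule.eq_of_le_of_finrank_le (hbot ⟨_, t, h, rfl⟩)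
    (ht.trans hx.symm).le)

/-- Along a line, the coefficient of the generic characteristic polynomial which detects regularity
is a polynomial in one variable. -/
lemma finite_setOf_not_isRegular (x : L) {y : L} (hy : IsRegular ℂ y) :
    {s : ℂ | ¬ IsRegular ℂ (x + s • (y - x))}.Finite := by
  let b := finBasis ℂ L
  let q := (LinearMap.polyCharpoly (ad ℂ L).toLinearMap b).coeff (rank ℂ L)
  let p : Polynomial ℂ := MvPolynomial.aeval (fun i => Polynomial.C (b.repr x i) +
    Polynomial.X * Polynomial.C (b.repr (y - x) i)) q
  have hp (s : ℂ) : p.eval s = MvPolynomial.eval (b.repr (x + s • (y - x))) q := by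
    rw [← Polynomial.coe_aeval_eq_eval, ← AlgHom.comp_apply, MvPolynomial.comp_aeval]
    change _ = MvPolynomial.aeval (R := ℂ) _ q
    congr 2
    funext i
    simp
  have hp_ne : p ≠ 0 := fun hzero => by
    have hone := hp 1
    rw [hzero, one_smul, add_sub_cancel, Polynomial.eval_zero] at hone
    exact (isRegular_iff_coeff_polyCharpoly_rank_ne_zero ℂ b y).mp hy hone.symm
  refine (p.finite_setOfPred_isRoot hp_ne).subset fun s hs => ?_
  rw [Set.mem_ofPred_eq, isRegular_iff_coeff_polyCharpoly_rank_ne_zero ℂ b, not_not] at hs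
  exact (hp s).trans hs

theorem exists_equiv_mem_engel_iff {x y : L} (hx : IsRegular ℂ x) (hy : IsRegular ℂ y) :
    ∃ σ : L ≃ₗ⁅ℂ⁆ L, ∀ w, w ∈ engel ℂ x ↔ σ w ∈ engel ℂ y := by
  refine rel_of_eventually_rel (R := {u | IsRegular ℂ u})
    (P := fun u u' => ∃ σ : L ≃ₗ⁅ℂ⁆ L, ∀ w, w ∈ engel ℂ u ↔ σ w ∈ engel ℂ u')
    ?_ ?_ hx hy (finite_setOf_not_isRegular x hy) fun u hu => ?_
  · rintro u v w ⟨σ, hσ⟩ ⟨τ, hτ⟩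
    exact ⟨σ.trans τ, fun z => (hσ z).trans (hτ _)⟩
  · rintro u v ⟨σ, hσ⟩
    exact ⟨σ.symm, fun z => by rw [hσ, LieEquiv.apply_symm_apply]⟩
  · filter_upwards [eventually_exists_mem_engel_expAd_eq u (y - x)] with s hs hreg
    obtain ⟨z, t, ht, heq⟩ := hs
    rw [← heq] at hreg ⊢
    refine ⟨expAd z, fun w => ?_⟩
    rw [apply_mem_engel_apply_iff,
      engel_eq_of_isRegular hu ((isRegular_apply_iff _).mp hreg) ht]

lemma exists_isRegular_mem_engel (x : L) : ∃ t ∈ engel ℂ x, IsRegular ℂ t := by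
  obtain ⟨ρ, hρ⟩ := exists_isRegular ℂ L
  have hreg : ∀ᶠ s in 𝓝[≠] (0 : ℂ), IsRegular ℂ (x + s • (ρ - x)) := by
    filter_upwards [nhdsNE_le_cofinite 0
      (finite_setOf_not_isRegular x hρ).compl_mem_cofinite] with s hs using not_not.mp hs
  obtain ⟨s, ⟨y, t, ht, heq⟩, hs⟩ := (((eventually_exists_mem_engel_expAd_eq x
    (ρ - x)).filter_mono nhdsWithin_le_nhds).and hreg).exists
  rw [← heq, isRegular_apply_iff] at hs
  exact ⟨t, ht, hs⟩

lemma isRegular_of_forall_mem_engel_lie_eq_zero {ρ : L}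
    (h : ∀ a ∈ engel ℂ ρ, ∀ b ∈ engel ℂ ρ, ⁅a, b⁆ = 0) : IsRegular ℂ ρ := by
  obtain ⟨t, ht, hreg⟩ := exists_isRegular_mem_engel ρ
  rw [isRegular_iff_finrank_engel_eq_rank] at hreg ⊢
  refine (rank_le_finrank_engel ℂ ρ).antisymm' (hreg ▸ ?_)
  exact Submodule.finrank_mono (show engel ℂ ρ ≤ engel ℂ t from fun a ha =>
    (mem_engel_iff ℂ t a).mpr ⟨1, h t ht a ha⟩)

/-- For semisimple `x` this says that `x` is conjugate into the given Cartan subalgebra. -/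
theorem exists_equiv_apply_mem_engel {x ρ : L} (hx : ∀ w ∈ engel ℂ x, ⁅x, w⁆ = 0)
    (hρ : IsRegular ℂ ρ) : ∃ σ : L ≃ₗ⁅ℂ⁆ L, σ x ∈ engel ℂ ρ := by
  obtain ⟨t, ht, hreg⟩ := exists_isRegular_mem_engel x
  obtain ⟨σ, hσ⟩ := exists_equiv_mem_engel_iff hreg hρ
  refine ⟨σ, (hσ x).mp ((mem_engel_iff ℂ t x).mpr ⟨1, ?_⟩)⟩
  rw [pow_one, ad_apply, ← lie_skew, hx t ht, neg_zero]

end CartanConjugacy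

section Pencil

lemma finite_setOf_not_surjective_add_smul {K V W : Type*} [Field K] [AddCommGroup V] [Module K V]
    [AddCommGroup W] [Module K W] [FiniteDimensional K W] (A : V →ₗ[K] W) {B : V →ₗ[K] W}
    (hB : Function.Surjective B) :
    {s : K | ¬ Function.Surjective (A + s • (B - A))}.Finite := by
  obtain ⟨σ, hσ⟩ := B.exists_rightInverse_of_surjective (LinearMap.range_eq_top.2 hB)
  let C : Module.End K W := A ∘ₗ σ
  refine ((C.finite_hasEigenvalue.image fun μ => μ / (μ - 1)).insert 1).subset fun s hs => ?_
  refine or_iff_not_imp_left.2 fun hs1 => ?_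
  have hcomp (w : W) : (A + s • (B - A)) (σ w) = s • w - (s - 1) • C w := by
    have hBσ : B (σ w) = w := LinearMap.congr_fun hσ w
    simp only [C, LinearMap.add_apply, LinearMap.smul_apply, LinearMap.sub_apply, hBσ,
      LinearMap.comp_apply]
    module
  have hker : LinearMap.ker ((A + s • (B - A)) ∘ₗ σ) ≠ ⊥ := fun hbot => hs <|
    .of_comp (LinearMap.injective_iff_surjective.1 (LinearMap.ker_eq_bot.1 hbot))
  obtain ⟨w, hw, hw0⟩ := Submodule.exists_mem_ne_zero_of_ne_bot hker
  have hs1' : s - 1 ≠ 0 := sub_ne_zero.2 hs1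
  have hCw : C w = (s / (s - 1)) • w := by
    rw [div_eq_inv_mul, mul_smul, eq_inv_smul_iff₀ hs1']
    exact (sub_eq_zero.1 ((hcomp w).symm.trans hw)).symm
  refine ⟨s / (s - 1), Module.End.hasEigenvalue_of_hasEigenvector
    ⟨Module.End.mem_eigenspace_iff.2 hCw, hw0⟩, ?_⟩
  field_simp
  ring

end Pencil

section Malcev

open Module Module.End Filter Topology LieModule

variable {L : Type*} [LieRing L] [LieAlgebra ℂ L] [FiniteDimensional ℂ L] {h e f : L}

lemma exists_lie_e_eq_of_lie_h_eq (t : IsSl2Triple h e f) {z : L} (hz : ⁅h, z⁆ = (2 : ℂ) • z) :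
    ∃ y : L, ⁅h, y⁆ = 0 ∧ ⁅y, e⁆ = z := by
  let g₂ := (toEnd ℂ L L h).eigenspace 2
  have hef (w : L) (hw : ⁅h, w⁆ = (2 : ℂ) • w) : ⁅h, ⁅f, w⁆⁆ = 0 := by
    rw [leibniz_lie, lie_h_f_eq_smul (K := ℂ) t, hw, smul_lie, lie_smul]
    module
  have hmaps : ∀ w ∈ g₂, (toEnd ℂ L L e * toEnd ℂ L L f) w ∈ g₂ := by
    intro w hw
    rw [mem_eigenspace_iff] at hw ⊢
    change ⁅h, ⁅e, ⁅f, w⁆⁆⁆ = (2 : ℂ) • ⁅e, ⁅f, w⁆⁆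
    rw [leibniz_lie h, t.lie_h_e_smul ℂ, hef w hw, lie_zero, add_zero, smul_lie]
  have hinj : Function.Injective ((toEnd ℂ L L e * toEnd ℂ L L f).restrict hmaps) := by
    rw [← LinearMap.ker_eq_bot, LinearMap.ker_eq_bot']
    rintro ⟨w, hw⟩ hw0
    have hfw : ⁅f, w⁆ = 0 := Submodule.disjoint_def.1 (disjoint_ker_e_range_f ℂ L t) _
      (congrArg Subtype.val hw0) ⟨w, rfl⟩
    by_contra hne
    obtain ⟨k, hk, -⟩ := exists_nat_of_lie_e_eq_zero t.symm (fun h0 => hne (Subtype.ext h0))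
      (mem_maxGenEigenspace_neg.2 (genEigenspace_le_maximal _ _ 1 hw)) hfw
    have : (-2 : ℤ) = k := by exact_mod_cast hk
    omega
  obtain ⟨⟨w, hw⟩, hwz⟩ := (LinearMap.injective_iff_surjective.1 hinj)
    ⟨z, mem_eigenspace_iff.2 hz⟩
  have hwz' : ⁅e, ⁅f, w⁆⁆ = z := congrArg Subtype.val hwz
  refine ⟨-⁅f, w⁆, by rw [lie_neg, hef w (mem_eigenspace_iff.1 hw), neg_zero], ?_⟩
  rw [neg_lie, lie_skew, hwz']

variable (h) in
/-- The elements `u` of weight `2` for `ad h` whose orbit under the centralizer of `h` is open in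
the space of elements of weight `2`. -/
def openOrbitSet : Set L :=
  {u | ⁅h, u⁆ = (2 : ℂ) • u ∧ ∀ z : L, ⁅h, z⁆ = (2 : ℂ) • z → ∃ y : L, ⁅h, y⁆ = 0 ∧ ⁅y, u⁆ = z}

lemma mem_openOrbitSet (t : IsSl2Triple h e f) : e ∈ openOrbitSet h :=
  ⟨t.lie_h_e_smul ℂ, fun _ => exists_lie_e_eq_of_lie_h_eq t⟩

lemma eventually_exists_equiv_of_mem_openOrbitSet {x z : L} (hx : x ∈ openOrbitSet h)
    (hz : ⁅h, z⁆ = (2 : ℂ) • z) :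
    ∀ᶠ s : ℂ in 𝓝 0, ∃ σ : L ≃ₗ⁅ℂ⁆ L, σ h = h ∧ σ x = x + s • z := by
  obtain ⟨N, hN⟩ := Submodule.exists_isCompl ((toEnd ℂ L L h).eigenspace 2)
  have hsplit (z : L) : ∃ y ∈ (toEnd ℂ L L h).eigenspace 0, ∃ t ∈ N, ⁅y, x⁆ + t = z := by
    obtain ⟨z', hz', t, ht, rfl⟩ := Submodule.mem_sup.1 (hN.sup_eq_top ▸ Submodule.mem_top (x := z))
    obtain ⟨y, hy, rfl⟩ := hx.2 z' (mem_eigenspace_iff.1 hz')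
    exact ⟨y, by simpa [mem_eigenspace_iff] using hy, t, ht, rfl⟩
  filter_upwards [eventually_exists_expAd_eq hsplit z] with s hs
  obtain ⟨y, hy, t, ht, heq⟩ := hs
  have hyh : expAd y h = h := expAd_of_lie_eq_zero (by
    rw [← lie_skew, neg_eq_zero]
    simpa [mem_eigenspace_iff] using hy)
  have hxt : ⁅h, x + t⁆ = (2 : ℂ) • (x + t) := by
    apply (expAd y).injective
    change expAd y ⁅h, x + t⁆ = expAd y ((2 : ℂ) • (x + t))
    rw [LieEquiv.map_lie, hyh, map_smul, heq, lie_add, lie_smul, hx.1, hz]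
    module
  have ht2 : t ∈ (toEnd ℂ L L h).eigenspace 2 := by
    rw [lie_add, hx.1, smul_add] at hxt
    exact mem_eigenspace_iff.2 (add_left_cancel hxt)
  rw [Submodule.disjoint_def.1 hN.disjoint t ht2 ht, add_zero] at heq
  exact ⟨expAd y, hyh, heq⟩

lemma finite_setOf_notMem_openOrbitSet {x y : L} (hx : ⁅h, x⁆ = (2 : ℂ) • x)
    (hy : y ∈ openOrbitSet h) : {s : ℂ | x + s • (y - x) ∉ openOrbitSet h}.Finite := by
  let bracket (u : L) (hu : ⁅h, u⁆ = (2 : ℂ) • u) :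
      (toEnd ℂ L L h).eigenspace 0 →ₗ[ℂ] (toEnd ℂ L L h).eigenspace 2 :=
    (-toEnd ℂ L L u).restrict fun w hw => by
      rw [eigenspace_zero, LinearMap.mem_ker, toEnd_apply_apply] at hw
      rw [mem_eigenspace_iff, toEnd_apply_apply, LinearMap.neg_apply, toEnd_apply_apply, lie_neg,
        leibniz_lie, hu, hw, lie_zero, add_zero, smul_lie, smul_neg]
  have hsurj : Function.Surjective (bracket y hy.1) := fun z => by
    obtain ⟨w, hw, hwz⟩ := hy.2 z (mem_eigenspace_iff.1 z.2)
    exact ⟨⟨w, by simpa [mem_eigenspace_iff] using hw⟩, Subtype.ext ((lie_skew w y).trans hwz)⟩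
  refine (finite_setOf_not_surjective_add_smul (bracket x hx) hsurj).subset fun s hs hs' => hs ?_
  refine ⟨by rw [lie_add, lie_smul, lie_sub, hx, hy.1]; module, fun z hz => ?_⟩
  obtain ⟨w, hw⟩ := hs' ⟨z, mem_eigenspace_iff.2 hz⟩
  refine ⟨w, by simpa [mem_eigenspace_iff] using w.2, ?_⟩
  have hwz : -⁅x, (w : L)⁆ + s • (-⁅y, (w : L)⁆ - -⁅x, (w : L)⁆) = z := congrArg Subtype.val hw
  rw [← hwz, lie_add, lie_smul, lie_sub, lie_skew, lie_skew]

theorem exists_equiv_of_isSl2Triple {e' f' : L} (t : IsSl2Triple h e f)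
    (t' : IsSl2Triple h e' f') : ∃ σ : L ≃ₗ⁅ℂ⁆ L, σ h = h ∧ σ e = e' ∧ σ f = f' := by
  obtain ⟨σ, hσh, hσe⟩ := rel_of_eventually_rel (R := openOrbitSet h)
    (P := fun u u' => ∃ σ : L ≃ₗ⁅ℂ⁆ L, σ h = h ∧ σ u = u') (by
      rintro u v w ⟨σ, hσ, rfl⟩ ⟨τ, hτ, rfl⟩
      exact ⟨σ.trans τ, (congrArg τ hσ).trans hτ, rfl⟩) (by
      rintro u v ⟨σ, hσ, rfl⟩
      refine ⟨σ.symm, ?_, σ.symm_apply_apply u⟩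
      nth_rw 1 [← hσ]
      exact σ.symm_apply_apply h) (mem_openOrbitSet t) (mem_openOrbitSet t')
    (finite_setOf_notMem_openOrbitSet (t.lie_h_e_smul ℂ) (mem_openOrbitSet t')) (by
      intro u hu
      filter_upwards [eventually_exists_equiv_of_mem_openOrbitSet hu
        (z := e' - e) (by rw [lie_sub, t.lie_h_e_smul ℂ, t'.lie_h_e_smul ℂ, smul_sub])]
        with s hs _ using hs)
  refine ⟨σ, hσh, hσe, sub_eq_zero.1 ?_⟩
  by_contra hne
  obtain ⟨k, hk, -⟩ := exists_nat_of_lie_e_eq_zero t' (μ := (-2 : ℂ)) hne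
    (genEigenspace_le_maximal _ _ 1 (mem_eigenspace_iff.2 (by
      rw [toEnd_apply_apply, lie_sub, lie_h_f_eq_smul (K := ℂ) t', smul_sub, ← map_smul σ,
        ← lie_h_f_eq_smul (K := ℂ) t, LieEquiv.map_lie, hσh])))
    (by rw [lie_sub, t'.lie_e_f, ← hσe, ← LieEquiv.map_lie, t.lie_e_f, hσh, sub_self])
  have : (-2 : ℤ) = k := by exact_mod_cast hk
  omega

end Malcev

section Diagonalizable

open Module

variable {K V : Type*} [Field K] [AddCommGroup V] [Module K V]

lemma exists_int_of_apply_eq_smul {H : End K V} (hH : ⨆ n : ℤ, H.eigenspace (n : K) = ⊤) {μ : K}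
    {x : V} (hx : H x = μ • x) (hx0 : x ≠ 0) : ∃ n : ℤ, μ = n := by
  by_contra! hne
  have htop : (⊤ : Submodule K V) ≤ ⨆ j, ⨆ (_ : j ≠ μ), H.eigenspace j :=
    hH.ge.trans (iSup_le fun n => le_iSup₂_of_le (n : K) (hne n).symm le_rfl)
  exact hx0 (Submodule.disjoint_def.mp (H.eigenspaces_iSupIndep μ) x
    (End.mem_eigenspace_iff.mpr hx) (htop trivial))

lemma maxGenEigenspace_eq_eigenspace_of_iSup_eq_top {H : End K V}
    (hH : ⨆ μ, H.eigenspace μ = ⊤) (μ : K) : H.maxGenEigenspace μ = H.eigenspace μ := by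
  have hle (ν : K) : H.eigenspace ν ≤ H.maxGenEigenspace ν := (H.genEigenspace ν).mono le_top
  refine le_antisymm (fun x hx => ?_) (hle μ)
  have htop : H.eigenspace μ ⊔ ⨆ ν, ⨆ (_ : ν ≠ μ), H.eigenspace ν = ⊤ :=
    (iSup_split_single _ μ).symm.trans hH
  obtain ⟨y, hy, z, hz, rfl⟩ := Submodule.mem_sup.mp (htop.ge (Submodule.mem_top (x := x)))
  have hz0 : z = 0 := Submodule.disjoint_def.mp (H.independent_maxGenEigenspace μ) z
    ((Submodule.add_mem_iff_right _ (hle μ hy)).mp hx) (iSup₂_mono (fun ν _ => hle ν) hz)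
  rwa [hz0, add_zero]

lemma repr_pow_apply_of_diagonal {ι : Type*} (b : Basis ι K V) {φ : End K V} {μ : ι → K}
    (h : ∀ i, φ (b i) = μ i • b i) (n : ℕ) (x : V) (i : ι) :
    b.repr ((φ ^ n) x) i = μ i ^ n * b.repr x i := by
  suffices b.coord i ∘ₗ φ ^ n = μ i ^ n • b.coord i from congr($this x)
  refine b.ext fun j => ?_
  have hpow : (φ ^ n) (b j) = μ j ^ n • b j :=
    End.HasEigenvector.pow_apply ⟨End.mem_eigenspace_iff.mpr (h j), b.ne_zero j⟩ n
  rcases eq_or_ne j i with rfl | hij <;> simp [*]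

end Diagonalizable

/-! ### Weights and the Weyl group -/

namespace E6

open SparseVector

variable {R : Type*} [Ring R]

/-- The coefficient of the root of the `i`-th basis vector on the `k`-th simple root, and zero for
the simple coroots `72 ≤ i`. -/
def coef (i k : ℕ) : ℤ := bif Nat.blt i 72 then sign (isNeg i) * digit (rootCode i) k else 0

/-- The weight of the `i`-th basis vector under an element of the Cartan subalgebra on which the
simple roots take the values `a`. -/
def wt (a : Fin 6 → R) (i : ℕ) : R := ∑ k, a k * coef i k

lemma wt_of_le (a : Fin 6 → R) {i : ℕ} (hi : 72 ≤ i) : wt a i = 0 := by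
  have hblt : Nat.blt i 72 = false := by
    rw [Bool.eq_false_iff, ne_eq, Nat.blt_eq]
    omega
  simp [wt, coef, hblt]

lemma wt_intCast (a : Fin 6 → ℤ) (i : ℕ) : wt (fun k => (a k : R)) i = (wt a i : ℤ) := by
  simp [wt]

lemma wt_sub_smul (a b : Fin 6 → ℤ) (c : ℤ) (i : ℕ) : wt (a - c • b) i = wt a i - c * wt b i := by
  simp [wt, sub_mul, Finset.sum_sub_distrib, Finset.mul_sum, mul_assoc]

/-- Three times the `k`-th fundamental coweight in terms of the simple coroots; the coefficients
are those of three times the inverse of the Cartan matrix. -/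
def coweight : Fin 6 → SparseVector :=
  ![[(72, 4), (73, 3), (74, 5), (75, 6), (76, 4), (77, 2)],
    [(72, 3), (73, 6), (74, 6), (75, 9), (76, 6), (77, 3)],
    [(72, 5), (73, 6), (74, 10), (75, 12), (76, 8), (77, 4)],
    [(72, 6), (73, 9), (74, 12), (75, 18), (76, 12), (77, 6)],
    [(72, 4), (73, 6), (74, 8), (75, 12), (76, 10), (77, 5)],
    [(72, 2), (73, 3), (74, 4), (75, 6), (76, 5), (77, 4)]]

set_option maxRecDepth 4000 in
lemma sc_coroot : ∀ (j : Fin 6) (i : Fin 78),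
    sc (72 + j) i = addSingle (wt (CartanMatrix.E₆ j) i) i [] := by
  decide +kernel

set_option maxRecDepth 4000 in
lemma sparseLie_coweight : ∀ (k : Fin 6) (i : Fin 78),
    sparseLie sc (coweight k) [(i.1, 1)] = addSingle (3 * coef i k) i [] := by
  decide +kernel

set_option maxRecDepth 4000 in
lemma wt_one_ne_zero : ∀ i : Fin 72, wt (1 : Fin 6 → ℤ) i ≠ 0 := by
  decide +kernel

set_option maxRecDepth 4000 in
lemma coef_simple : ∀ k j : Fin 6, coef k j = Pi.single (M := fun _ => ℤ) k 1 j ∧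
    coef (36 + k) j = Pi.single (M := fun _ => ℤ) k (-1) j := by
  decide +kernel

lemma wt_simple (a : Fin 6 → R) (k : Fin 6) : wt a k = a k := by
  simp [wt, coef_simple, Pi.single_apply]

lemma wt_neg_simple (a : Fin 6 → R) (k : Fin 6) : wt a (36 + k) = -a k := by
  simp [wt, coef_simple, Pi.single_apply]

/-- The value of the sum of the positive roots at an element of the Cartan subalgebra on which the
simple roots take the values `a`. -/
def height (a : Fin 6 → ℤ) : ℤ := ∑ i ∈ Finset.range 36, wt a i

lemma height_sub_smul (a b : Fin 6 → ℤ) (c : ℤ) : height (a - c • b) = height a - c * height b := by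
  simp only [height, wt_sub_smul, Finset.sum_sub_distrib, Finset.mul_sum]

lemma height_cartanMatrix : ∀ k, height (CartanMatrix.E₆ k) = 2 := by
  decide +kernel

end E6

namespace IsE6Basis

open Module LieAlgebra SparseVector

variable {L : Type*} [LieRing L] [LieAlgebra ℂ L] {B : ℕ → L}

/-- The members of an E₆ basis as a `Module.Basis`. -/
noncomputable def basis (hB : IsE6Basis B) : Basis (Fin 78) ℂ L :=
  Basis.mk hB.linearIndependent hB.span_eq_top.ge

@[simp]
lemma basis_apply (hB : IsE6Basis B) (i : Fin 78) : hB.basis i = B i := by simp [basis]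

lemma ne_zero (hB : IsE6Basis B) {i : ℕ} (hi : i < 78) : B i ≠ 0 :=
  hB.linearIndependent.ne_zero ⟨i, hi⟩

/-- The element of the Cartan subalgebra on which the simple roots take the values `a`. -/
noncomputable def torus (B : ℕ → L) (a : Fin 6 → ℂ) : L :=
  ∑ k, (a k / 3) • combine B (E6.coweight k)

lemma lie_torus (hB : IsE6Basis B) (a : Fin 6 → ℂ) (i : Fin 78) :
    ⁅torus B a, B i⁆ = E6.wt a i • B i := by
  have lie_coweight (k : Fin 6) :
      ⁅combine B (E6.coweight k), B i⁆ = (3 * E6.coef i k : ℂ) • B i := by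
    have hlie := combine_sparseLie hB.lie (E6.coweight k) [(i.1, 1)]
    rw [E6.sparseLie_coweight k i, combine_addSingle] at hlie
    simp only [combine, one_smul, add_zero] at hlie
    rw [← hlie, ← Int.cast_smul_eq_zsmul ℂ]
    push_cast
    rfl
  simp only [torus, sum_lie, smul_lie, lie_coweight, smul_smul, ← Finset.sum_smul, E6.wt]
  congr! 2 with k
  ring

lemma lie_coroot (hB : IsE6Basis B) (j : Fin 6) (i : Fin 78) :
    ⁅B (72 + j), B i⁆ = ((E6.wt (CartanMatrix.E₆ j) i : ℤ) : ℂ) • B i := by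
  rw [hB.lie, E6.sc_coroot j i, combine_addSingle, combine, add_zero, Int.cast_smul_eq_zsmul]

/-- The Cartan subalgebra spanned by the simple coroots. -/
def cartan (B : ℕ → L) : Submodule ℂ L := Submodule.span ℂ (Set.range fun j : Fin 6 => B (72 + j))

lemma exists_wt_of_mem_cartan (hB : IsE6Basis B) {x : L} (hx : x ∈ cartan B) :
    ∃ a : Fin 6 → ℂ, ∀ i : Fin 78, ⁅x, B i⁆ = E6.wt a i • B i := by
  obtain ⟨c, rfl⟩ := (Submodule.mem_span_range_iff_exists_fun ℂ).mp hx
  refine ⟨fun k => ∑ j, c j * CartanMatrix.E₆ j k, fun i => ?_⟩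
  simp only [sum_lie, smul_lie, hB.lie_coroot, smul_smul, ← Finset.sum_smul, ← E6.wt_intCast]
  simp only [E6.wt, Finset.mul_sum, Finset.sum_mul, mul_assoc]
  rw [Finset.sum_comm]

lemma engel_torus_one_le_cartan (hB : IsE6Basis B) :
    (LieSubalgebra.engel ℂ (torus B 1)).toSubmodule ≤ cartan B := by
  intro w hw
  obtain ⟨n, hn⟩ := (LieSubalgebra.mem_engel_iff ℂ _ _).mp hw
  have repr_eq_zero (i : Fin 78) (hi : i < 72) : hB.basis.repr w i = 0 := by
    have hrepr := repr_pow_apply_of_diagonal hB.basis (φ := ad ℂ L (torus B 1))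
      (fun i => by simpa using hB.lie_torus 1 i) n w i
    rw [hn, map_zero, Finsupp.zero_apply, eq_comm, mul_eq_zero] at hrepr
    refine hrepr.resolve_left (pow_ne_zero _ ?_)
    have hwt := E6.wt_intCast (R := ℂ) 1 i
    simp only [Pi.one_apply, Int.cast_one] at hwt
    exact hwt.trans_ne (Int.cast_ne_zero.mpr (E6.wt_one_ne_zero ⟨i, hi⟩))
  rw [← hB.basis.sum_repr w]
  refine Submodule.sum_mem _ fun i _ => ?_
  by_cases hi : i < 72
  · simp [repr_eq_zero i hi]
  · refine Submodule.smul_mem _ _ (Submodule.subset_span ⟨⟨i - 72, by omega⟩, ?_⟩)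
    simp only [basis_apply]
    congr 1
    omega

lemma lie_eq_zero_of_mem_cartan (hB : IsE6Basis B) {x y : L} (hx : x ∈ cartan B)
    (hy : y ∈ cartan B) : ⁅x, y⁆ = 0 := by
  obtain ⟨a, ha⟩ := hB.exists_wt_of_mem_cartan hx
  obtain ⟨c, rfl⟩ := (Submodule.mem_span_range_iff_exists_fun ℂ).mp hy
  have lie_coroot_eq_zero (j : Fin 6) : ⁅x, B (72 + j)⁆ = 0 := by
    rw [ha ⟨72 + j, by omega⟩, E6.wt_of_le a (by simp), zero_smul]
  simp [lie_sum, lie_coroot_eq_zero]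

/-- All Cartan subalgebras being conjugate, that of an E₆ basis can be moved onto one containing a
given diagonalizable element. -/
theorem exists_mem_cartan [FiniteDimensional ℂ L] (hB : IsE6Basis B) {h : L}
    (hh : ⨆ n : ℤ, (ad ℂ L h).eigenspace (n : ℂ) = ⊤) :
    ∃ B' : ℕ → L, IsE6Basis B' ∧ h ∈ cartan B' := by
  have hreg : IsRegular ℂ (torus B 1) := isRegular_of_forall_mem_engel_lie_eq_zero
    fun a ha b hb => hB.lie_eq_zero_of_mem_cartan (hB.engel_torus_one_le_cartan ha)
      (hB.engel_torus_one_le_cartan hb)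
  have htop : ⨆ μ, (ad ℂ L h).eigenspace μ = ⊤ :=
    eq_top_iff.mpr (hh.ge.trans (iSup_le fun n => le_iSup (ad ℂ L h).eigenspace (n : ℂ)))
  have lie_eq_zero (w : L) (hw : w ∈ LieSubalgebra.engel ℂ h) : ⁅h, w⁆ = 0 := by
    have hw' : w ∈ (ad ℂ L h).maxGenEigenspace 0 := by
      simpa [LieSubalgebra.mem_engel_iff, End.mem_maxGenEigenspace] using hw
    rw [maxGenEigenspace_eq_eigenspace_of_iSup_eq_top htop, End.mem_eigenspace_iff,
      zero_smul] at hw'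
    exact hw'
  obtain ⟨σ, hσ⟩ := exists_equiv_apply_mem_engel lie_eq_zero hreg
  refine ⟨fun i => σ.symm (B i), hB.map σ.symm, ?_⟩
  have hmem := Submodule.mem_map_of_mem (f := σ.symm.toLinearEquiv.toLinearMap)
    (hB.engel_torus_one_le_cartan hσ)
  rw [cartan, Submodule.map_span, ← Set.range_comp] at hmem
  have hsymm : σ.symm (σ h) ∈ cartan fun i => σ.symm (B i) := hmem
  rwa [σ.symm_apply_apply] at hsymm

lemma isSl2Triple (hB : IsE6Basis B) (k : Fin 6) :
    IsSl2Triple (B (72 + k)) (B k) (B (36 + k)) where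
  h_ne_zero := hB.ne_zero (by omega)
  lie_e_f := by simp [hB.lie, (E6.sc_serre k k).2.1, combine]
  lie_h_e_nsmul := by
    simp [hB.lie, (E6.sc_serre k k).2.2.1, combine_addSingle, combine, ← ofNat_smul_eq_nsmul ℤ]
  lie_h_f_nsmul := by
    simp [hB.lie, (E6.sc_serre k k).2.2.2.1, combine_addSingle, combine, ← ofNat_smul_eq_nsmul ℤ]

end IsE6Basis

/-- An E₆ basis consisting of eigenvectors of `ad h`, where `a` are the values of the simple roots
at `h`. -/
structure IsE6Grading {L : Type*} [LieRing L] [LieAlgebra ℂ L] (B : ℕ → L) (h : L)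
    (a : Fin 6 → ℤ) : Prop extends IsE6Basis B where
  weight : ∀ i < 78, ⁅h, B i⁆ = ((E6.wt a i : ℤ) : ℂ) • B i

section Reflection

open LieAlgebra

variable {L : Type*} [LieRing L] [LieAlgebra ℂ L] [FiniteDimensional ℂ L]

/-- The automorphism `exp (ad x) ∘ exp (-ad y) ∘ exp (ad x)`. -/
noncomputable def reflection (x y : L) : L ≃ₗ⁅ℂ⁆ L :=
  ((expAd x).trans (expAd (-y))).trans (expAd x)

lemma reflection_apply (x y z : L) : reflection x y z = expAd x (expAd (-y) (expAd x z)) := rfl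

lemma reflection_apply_self {c x y : L} (t : IsSl2Triple c x y) : reflection x y c = -c := by
  have lie_x_c : ⁅x, c⁆ = -(2 • x) := by rw [← lie_skew, t.lie_h_e_nsmul]
  have lie_y_c : ⁅y, c⁆ = 2 • y := by rw [← lie_skew, t.lie_h_f_nsmul, neg_neg]
  have lie_y_x : ⁅y, x⁆ = -c := by rw [← lie_skew, t.lie_e_f]
  have exp_x_c : expAd x c = c - (2 : ℂ) • x := by
    rw [expAd_of_lie_lie_lie_eq_zero] <;> simp [lie_x_c, ofNat_smul_eq_nsmul, sub_eq_add_neg]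
  have exp_y : expAd (-y) (c - (2 : ℂ) • x) = -c - (2 : ℂ) • x := by
    rw [expAd_of_lie_lie_lie_eq_zero] <;> simp [lie_y_c, lie_y_x, ofNat_smul_eq_nsmul, smul_smul]
    module
  have exp_x : expAd x (-c - (2 : ℂ) • x) = -c := by
    rw [expAd_of_lie_lie_lie_eq_zero] <;> simp [lie_x_c, ofNat_smul_eq_nsmul]
  rw [reflection_apply, exp_x_c, exp_y, exp_x]

lemma reflection_apply_of_lie_eq_zero {x y z : L} (hx : ⁅x, z⁆ = 0) (hy : ⁅y, z⁆ = 0) :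
    reflection x y z = z := by
  have hy' : ⁅-y, z⁆ = 0 := by rw [neg_lie, hy, neg_zero]
  rw [reflection_apply, expAd_of_lie_eq_zero hx, expAd_of_lie_eq_zero hy', expAd_of_lie_eq_zero hx]

lemma reflection_apply_of_lie_eq_smul {c x y h : L} {a : ℂ} (t : IsSl2Triple c x y)
    (hx : ⁅h, x⁆ = a • x) (hy : ⁅h, y⁆ = -a • y) : reflection x y h = h - a • c := by
  have hx' : ⁅x, h - (a / 2) • c⁆ = 0 := by
    rw [← lie_skew, sub_lie, smul_lie, hx, t.lie_h_e_smul ℂ]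
    module
  have hy' : ⁅y, h - (a / 2) • c⁆ = 0 := by
    rw [← lie_skew, sub_lie, smul_lie, hy, lie_h_f_eq_smul (K := ℂ) t]
    module
  calc reflection x y h = reflection x y (h - (a / 2) • c) + (a / 2) • reflection x y c := by
        rw [← LieEquiv.coe_toLieHom, ← map_smul, ← map_add, sub_add_cancel]
    _ = h - a • c := by
        rw [reflection_apply_of_lie_eq_zero hx' hy', reflection_apply_self t]
        module

end Reflection

namespace IsE6Grading

open Module LieAlgebra

variable {L : Type*} [LieRing L] [LieAlgebra ℂ L] {B : ℕ → L} {h : L} {a : Fin 6 → ℤ}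

lemma map (hB : IsE6Grading B h a) (σ : L ≃ₗ⁅ℂ⁆ L) : IsE6Grading (fun i => σ (B i)) (σ h) a where
  toIsE6Basis := hB.toIsE6Basis.map σ
  weight i hi := by
    rw [← LieEquiv.coe_toLieHom, ← LieHom.map_lie, hB.weight i hi, map_smul]

variable [FiniteDimensional ℂ L]

lemma exists_reflection (hB : IsE6Grading B h a) (k : Fin 6) :
    ∃ B' : ℕ → L, IsE6Grading B' h (a - a k • CartanMatrix.E₆ k) := by
  let σ := reflection (B k) (B (36 + k))
  have hσ : σ h = h - (a k : ℂ) • B (72 + k) :=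
    reflection_apply_of_lie_eq_smul (hB.isSl2Triple k)
      (by rw [hB.weight k (by omega), E6.wt_simple])
      (by rw [hB.weight _ (by omega), E6.wt_neg_simple, Int.cast_neg])
  have hBσ : IsE6Grading B (σ h) (a - a k • CartanMatrix.E₆ k) := ⟨hB.toIsE6Basis, fun i hi => by
    rw [hσ, sub_lie, smul_lie, hB.weight i hi, hB.lie_coroot k ⟨i, hi⟩, E6.wt_sub_smul]
    push_cast
    module⟩
  exact ⟨_, by simpa using hBσ.map σ.symm⟩

lemma exists_forall_wt_le (h : L) : ∃ M : ℤ, ∀ (B : ℕ → L) (a : Fin 6 → ℤ), IsE6Grading B h a →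
    ∀ i < 78, E6.wt a i ≤ M := by
  have hfin : {n : ℤ | (ad ℂ L h).HasEigenvalue (n : ℂ)}.Finite :=
    (End.finite_hasEigenvalue (ad ℂ L h)).preimage Int.cast_injective.injOn
  obtain ⟨M, hM⟩ := hfin.bddAbove
  exact ⟨M, fun B a hB i hi => hM (End.hasEigenvalue_of_hasEigenvector
    ⟨End.mem_eigenspace_iff.mpr (hB.weight i hi), hB.ne_zero hi⟩)⟩

/-- A grading maximizing the height of `a` is dominant, since a reflection in a simple root with
`a k < 0` would increase the height. -/
lemma exists_dominant (hB : IsE6Grading B h a) :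
    ∃ (B' : ℕ → L) (a' : Fin 6 → ℤ), IsE6Grading B' h a' ∧ ∀ k, 0 ≤ a' k := by
  obtain ⟨M, hM⟩ := exists_forall_wt_le h
  have height_le {B' : ℕ → L} {a' : Fin 6 → ℤ} (hB' : IsE6Grading B' h a') :
      E6.height a' ≤ 36 * M := by
    simpa [E6.height] using Finset.sum_le_card_nsmul (Finset.range 36) _ M
      fun i hi => hM B' a' hB' i ((Finset.mem_range.mp hi).trans (by norm_num))
  obtain ⟨_, ⟨B', a', hB', rfl⟩, hmax⟩ := Int.exists_greatest_of_bdd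
    (P := fun n => ∃ B' a', IsE6Grading (L := L) B' h a' ∧ E6.height a' = n)
    ⟨36 * M, by rintro _ ⟨B', a', hB', rfl⟩; exact height_le hB'⟩ ⟨_, B, a, hB, rfl⟩
  refine ⟨B', a', hB', fun k => ?_⟩
  obtain ⟨B'', hB''⟩ := hB'.exists_reflection k
  have hle := hmax _ ⟨B'', _, hB'', rfl⟩
  rw [E6.height_sub_smul, E6.height_cartanMatrix] at hle
  linarith

end IsE6Grading

theorem IsE6Basis.exists_isE6Grading {L : Type*} [LieRing L] [LieAlgebra ℂ L]
    [FiniteDimensional ℂ L] {B : ℕ → L} {h : L} (hB : IsE6Basis B)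
    (hh : ⨆ n : ℤ, (LieAlgebra.ad ℂ L h).eigenspace (n : ℂ) = ⊤) :
    ∃ (B' : ℕ → L) (a : Fin 6 → ℤ), IsE6Grading B' h a ∧ ∀ k, 0 ≤ a k := by
  obtain ⟨B', hB', hmem⟩ := hB.exists_mem_cartan hh
  obtain ⟨a, ha⟩ := hB'.exists_wt_of_mem_cartan hmem
  have exists_int (k : Fin 6) : ∃ n : ℤ, a k = n :=
    exists_int_of_apply_eq_smul hh (by simpa [E6.wt_simple] using ha ⟨k, by omega⟩)
      (hB'.ne_zero (i := k) (by omega))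
  choose n hn using exists_int
  refine IsE6Grading.exists_dominant (a := n) ⟨hB', fun i hi => ?_⟩
  rw [ha ⟨i, hi⟩, ← E6.wt_intCast, funext hn]

/-! ### Weighted Dynkin diagrams of distinguished elements -/

section Killing

open Module LieAlgebra

variable {L : Type*} [LieRing L] [LieAlgebra ℂ L] [FiniteDimensional ℂ L] [IsKilling ℂ L]

/-- The semisimple part `s` of `ad x` acts by `μ` on the generalized `μ`-eigenspace of `ad x`; as
brackets add eigenvalues, it is a derivation. -/
lemma exists_ad_eq_of_isSemisimple {x : L} {s : End ℂ L} (hs : s.IsSemisimple)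
    (hc : Commute (ad ℂ L x) s) (hn : IsNilpotent (ad ℂ L x - s)) : ∃ y, ad ℂ L y = s := by
  have apply_eq {μ : ℂ} {u : L} (hu : u ∈ (ad ℂ L x).maxGenEigenspace μ) : s u = μ • u :=
    End.apply_eq_of_mem_of_comm_of_isFinitelySemisimple_of_isNil hu hc hs.isFinitelySemisimple hn
  have mem_iSup (u : L) : u ∈ ⨆ μ, (ad ℂ L x).maxGenEigenspace μ := by
    rw [End.iSup_maxGenEigenspace_eq_top]
    trivial
  have leibniz (u v : L) : s ⁅u, v⁆ = ⁅u, s v⁆ - ⁅v, s u⁆ := by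
    induction mem_iSup u using Submodule.iSup_induction' with
    | mem μ u hu =>
      induction mem_iSup v using Submodule.iSup_induction' with
      | mem ν v hv =>
        have huv : ⁅u, v⁆ ∈ (ad ℂ L x).maxGenEigenspace (μ + ν) :=
          LieModule.lie_mem_maxGenEigenspace_toEnd hu hv
        rw [apply_eq huv, apply_eq hu, apply_eq hv, lie_smul, lie_smul, ← lie_skew u v]
        module
      | zero => simp
      | add v w _ _ hv hw =>
        simp only [lie_add, add_lie, map_add, hv, hw]
        abel
    | zero => simp
    | add u w _ _ hu hw =>
      simp only [lie_add, add_lie, map_add, hu, hw]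
      abel
  obtain ⟨y, hy⟩ := LieDerivation.IsKilling.exists_eq_ad (⟨s, leibniz⟩ : LieDerivation ℂ L L)
  refine ⟨y, LinearMap.ext fun u => ?_⟩
  rw [← LieDerivation.coe_ad_apply_eq_ad_apply]
  exact LieDerivation.congr_fun hy u

namespace IsDistinguished

variable {e h f : L}

lemma isNilpotent_ad (he : IsDistinguished L e) {x : L} (hx : ⁅x, e⁆ = 0) :
    IsNilpotent (ad ℂ L x) := by
  obtain ⟨n, _, s, hs, hnil, hss, hsum⟩ :=
    End.exists_isNilpotent_isSemisimple (K := ℂ) (f := ad ℂ L x)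
  have hc : Commute (ad ℂ L x) s := Algebra.commute_of_mem_adjoin_self hs
  have hsub : IsNilpotent (ad ℂ L x - s) := by rwa [hsum, add_sub_cancel_right]
  obtain ⟨y, rfl⟩ := exists_ad_eq_of_isSemisimple hss hc hsub
  have he0 : e ∈ (ad ℂ L x).maxGenEigenspace 0 :=
    End.mem_maxGenEigenspace _ _ _ |>.mpr ⟨1, by simpa using hx⟩
  have hye : ⁅y, e⁆ = 0 := by
    simpa using End.apply_eq_of_mem_of_comm_of_isFinitelySemisimple_of_isNil he0 hc
      hss.isFinitelySemisimple hsub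
  obtain rfl := he y hye hss
  rwa [hsum, map_zero, add_zero]

lemma killingForm_eq_zero (he : IsDistinguished L e) {x y : L} (hx : ⁅x, e⁆ = 0)
    (hy : ⁅y, e⁆ = 0) : killingForm ℂ L x y = 0 := by
  have : LieModule.IsNilpotent (centralizer L e) L :=
    LieModule.isNilpotent_iff_forall' (R := ℂ) |>.mpr fun z => he.isNilpotent_ad z.2
  exact congr($(LieModule.traceForm_eq_zero_of_isNilpotent ℂ (centralizer L e) L) ⟨x, hx⟩ ⟨y, hy⟩)

/-- The centralizer of `e` is isotropic for the Killing form, so an element commuting with both `e`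
and `f` is orthogonal to `ker (ad e) + range (ad f)`, which is everything. -/
lemma eq_zero_of_lie_eq_zero (he : IsDistinguished L e) (t : IsSl2Triple h e f) {x : L}
    (hxe : ⁅x, e⁆ = 0) (hxf : ⁅x, f⁆ = 0) : x = 0 := by
  suffices x ∈ LinearMap.ker (killingForm ℂ L) by simpa using this
  refine LinearMap.mem_ker.mpr (LinearMap.ext fun y => ?_)
  have hy := (ker_e_sup_range_f_eq_top ℂ L t).ge (Submodule.mem_top (x := y))
  obtain ⟨u, hu, _, ⟨w, rfl⟩, rfl⟩ := Submodule.mem_sup.mp hy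
  have hue : ⁅u, e⁆ = 0 := by rw [← lie_skew, neg_eq_zero]; exact hu
  rw [map_add, he.killingForm_eq_zero hxe hue, LieModule.toEnd_apply_apply,
    ← LieModule.traceForm_apply_lie_apply, hxf]
  simp

lemma eq_zero_of_nonpos (he : IsDistinguished L e) (t : IsSl2Triple h e f) {x : L} {n : ℤ}
    (hn : n ≤ 0) (hx : ⁅e, x⁆ = 0) (hhx : ⁅h, x⁆ = (n : ℂ) • x) : x = 0 := by
  by_contra hx0
  have hprim : t.HasPrimitiveVectorWith x (n : ℂ) := ⟨hx0, hhx, hx⟩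
  obtain ⟨m, hm⟩ := hprim.exists_nat
  obtain rfl : n = 0 := by
    have hnm : n = m := by exact_mod_cast hm
    omega
  have hfx : ⁅f, x⁆ = 0 := by
    simpa using hprim.pow_toEnd_f_eq_zero_of_eq_nat (n := 0) (by simp)
  exact hx0 (he.eq_zero_of_lie_eq_zero t (by rw [← lie_skew, hx, neg_zero])
    (by rw [← lie_skew, hfx, neg_zero]))

lemma finrank_eigenspace_le (he : IsDistinguished L e) (t : IsSl2Triple h e f) {n : ℤ}
    (hn : n ≤ 0) : finrank ℂ ((ad ℂ L h).eigenspace (n : ℂ)) ≤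
      finrank ℂ ((ad ℂ L h).eigenspace ((n + 2 : ℤ) : ℂ)) := by
  have mapsTo : ∀ x ∈ (ad ℂ L h).eigenspace (n : ℂ),
      ad ℂ L e x ∈ (ad ℂ L h).eigenspace ((n + 2 : ℤ) : ℂ) := by
    intro x hx
    rw [End.mem_eigenspace_iff, ad_apply] at hx ⊢
    rw [ad_apply, leibniz_lie, hx, t.lie_h_e_smul ℂ, smul_lie, lie_smul, ← add_smul]
    push_cast
    rw [add_comm]
  refine LinearMap.finrank_le_finrank_of_injective (f := (ad ℂ L e).restrict mapsTo)
    ((injective_iff_map_eq_zero _).mpr fun ⟨x, hx⟩ hex => Subtype.ext ?_)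
  exact he.eq_zero_of_nonpos t hn congr(($hex : L)) (End.mem_eigenspace_iff.mp hx)

end IsDistinguished

end Killing

namespace E6

lemma coef_opposite : ∀ (i : Fin 36) (k : Fin 6), 0 ≤ coef i k ∧ coef (36 + i) k = -coef i k := by
  decide +kernel

lemma wt_nonneg {a : Fin 6 → ℤ} (ha : ∀ k, 0 ≤ a k) {i : ℕ} (hi : i < 36) : 0 ≤ wt a i :=
  Finset.sum_nonneg fun k _ => mul_nonneg (ha k) (by simpa using (coef_opposite ⟨i, hi⟩ k).1)

lemma wt_opposite (a : Fin 6 → ℤ) {i : ℕ} (hi : i < 36) : wt a (36 + i) = -wt a i := by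
  simp [wt, (coef_opposite ⟨i, hi⟩ _).2]

lemma lt_of_wt_pos {a : Fin 6 → ℤ} (ha : ∀ k, 0 ≤ a k) {i : ℕ} (hi : 0 < wt a i) : i < 36 := by
  by_contra! hle
  rcases lt_or_ge i 72 with hlt | hge
  · have hopp := wt_opposite a (i := i - 36) (by omega)
    have hnonneg := wt_nonneg ha (i := i - 36) (by omega)
    rw [Nat.add_sub_cancel' hle] at hopp
    omega
  · exact hi.ne' (wt_of_le a hge)

/-- The multiplicity of the weight `d`. -/
def mult (a : Fin 6 → ℤ) (d : ℤ) : ℕ := Nat.count (fun i => wt a i = d) 78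

lemma mult_eq (a : Fin 6 → ℤ) (d : ℤ) : mult a d = Nat.count (fun i => wt a i = d) 36 +
    Nat.count (fun i => wt a i = -d) 36 + if d = 0 then 6 else 0 := by
  have count_opposite : Nat.count (fun i => wt a (36 + i) = d) 36 =
      Nat.count (fun i => wt a i = -d) 36 := by
    simp only [Nat.count_eq_card_filter_range]
    refine congrArg Finset.card (Finset.filter_congr fun i hi => ?_)
    rw [wt_opposite a (Finset.mem_range.mp hi), neg_eq_iff_eq_neg]
  have count_coroot : Nat.count (fun i => wt a (72 + i) = d) 6 = if d = 0 then 6 else 0 := by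
    simp only [Nat.count_eq_card_filter_range, wt_of_le a (Nat.le_add_right 72 _),
      Finset.filter_const, eq_comm (a := d)]
    split_ifs <;> rfl
  rw [mult, show 78 = 36 + 36 + 6 from rfl, Nat.count_add, Nat.count_add, count_opposite,
    count_coroot]

lemma mult_neg (a : Fin 6 → ℤ) (d : ℤ) : mult a (-d) = mult a d := by
  rw [mult_eq, mult_eq, neg_neg, add_comm (Nat.count _ _)]
  simp only [neg_eq_zero]

set_option maxRecDepth 10000 in
lemma mem_of_count_eq : ∀ a₀ a₁ a₂ a₃ a₄ a₅ : Fin 3,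
    2 * Nat.count (fun i => wt ![(a₀ : ℤ), a₁, a₂, a₃, a₄, a₅] i = 0) 36 + 6 =
      Nat.count (fun i => wt ![(a₀ : ℤ), a₁, a₂, a₃, a₄, a₅] i = 2) 36 →
    ![(a₀ : ℤ), a₁, a₂, a₃, a₄, a₅] ∈
      [![2, 0, 0, 2, 0, 2], ![2, 2, 2, 0, 2, 2], ![2, 2, 2, 2, 2, 2]] := by
  decide +kernel

lemma mem_of_mult_eq {a : Fin 6 → ℤ} (ha : ∀ k, 0 ≤ a k) (ha2 : ∀ k, a k ≤ 2)
    (h : mult a 0 = mult a 2) :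
    a ∈ [![2, 0, 0, 2, 0, 2], ![2, 2, 2, 0, 2, 2], ![2, 2, 2, 2, 2, 2]] := by
  have exists_fin (k : Fin 6) : ∃ c : Fin 3, a k = c :=
    ⟨⟨(a k).toNat, by have := ha2 k; omega⟩, (Int.toNat_of_nonneg (ha k)).symm⟩
  choose c hc using exists_fin
  have heq : a = ![(c 0 : ℤ), c 1, c 2, c 3, c 4, c 5] := by
    ext k
    rw [hc]
    fin_cases k <;> rfl
  have count_neg : Nat.count (fun i => wt a i = -2) 36 = 0 := by
    rw [Nat.count_eq_card_filter_range, Finset.card_eq_zero, Finset.filter_eq_empty_iff]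
    intro i hi
    have := wt_nonneg ha (Finset.mem_range.mp hi)
    omega
  rw [mult_eq, mult_eq, count_neg, neg_zero, if_pos rfl, if_neg two_ne_zero, add_zero, add_zero,
    ← two_mul] at h
  have hmem := mem_of_count_eq (c 0) (c 1) (c 2) (c 3) (c 4) (c 5)
  rw [← heq] at hmem
  exact hmem h

set_option maxRecDepth 4000 in
lemma lt_of_mem_sc_neg_simple : ∀ i : Fin 36, ∀ k : Fin 6, i.1 ≠ k →
    ∀ t ∈ sc i (36 + k), t.1 < 36 := by
  decide +kernel

end E6

section Diagonal

open Module

variable {K V ι : Type*} [Field K] [AddCommGroup V] [Module K V]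

lemma repr_eq_zero_of_diagonal (b : Basis ι K V) {φ : End K V} {μ : ι → K}
    (h : ∀ i, φ (b i) = μ i • b i) {x : V} {c : K} (hx : φ x = c • x) {i : ι} (hi : μ i ≠ c) :
    b.repr x i = 0 := by
  have hrepr := repr_pow_apply_of_diagonal b h 1 x i
  rw [pow_one, pow_one, hx, map_smul, Finsupp.smul_apply, smul_eq_mul] at hrepr
  exact (mul_eq_mul_right_iff.mp hrepr).resolve_left hi.symm

lemma eigenspace_eq_span_of_diagonal (b : Basis ι K V) {φ : End K V} {μ : ι → K}
    (h : ∀ i, φ (b i) = μ i • b i) (c : K) :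
    φ.eigenspace c = Submodule.span K (b '' {i | μ i = c}) := by
  refine le_antisymm (fun x hx => b.mem_span_image.mpr fun i hi => ?_)
    (Submodule.span_le.mpr ?_)
  · by_contra hne
    exact Finsupp.mem_support_iff.mp hi
      (repr_eq_zero_of_diagonal b h (End.mem_eigenspace_iff.mp hx) hne)
  · rintro _ ⟨i, rfl, rfl⟩
    exact End.mem_eigenspace_iff.mpr (h i)

end Diagonal

namespace IsE6Grading

open Module LieAlgebra SparseVector

variable {L : Type*} [LieRing L] [LieAlgebra ℂ L] {B : ℕ → L} {e h f : L} {a : Fin 6 → ℤ}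

lemma ad_basis (hB : IsE6Grading B h a) (i : Fin 78) :
    ad ℂ L h (hB.basis i) = ((E6.wt a i : ℤ) : ℂ) • hB.basis i := by
  simpa using hB.weight i i.2

lemma eigenspace_eq_span (hB : IsE6Grading B h a) (n : ℤ) :
    (ad ℂ L h).eigenspace (n : ℂ) = Submodule.span ℂ (hB.basis '' {i | E6.wt a i = n}) := by
  rw [eigenspace_eq_span_of_diagonal hB.basis hB.ad_basis]
  simp only [Int.cast_inj]

lemma finrank_eigenspace (hB : IsE6Grading B h a) (n : ℤ) :
    finrank ℂ ((ad ℂ L h).eigenspace (n : ℂ)) = E6.mult a n := by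
  have hli : LinearIndependent ℂ fun i : {i : Fin 78 // E6.wt a i = n} => hB.basis i :=
    hB.basis.linearIndependent.comp _ Subtype.val_injective
  rw [hB.eigenspace_eq_span, Set.image_eq_range]
  refine (finrank_span_eq_card hli).trans ?_
  rw [E6.mult, Nat.count_eq_card_filter_range, ← Nat.Iio_eq_range, ← Fin.map_valEmbedding_univ,
    Finset.filter_map, Finset.card_map, Fintype.card_subtype]
  rfl

lemma mem_span_of_lie_eq_smul (hB : IsE6Grading B h a) {s : Set ℕ} {n : ℤ}
    (hs : ∀ i < 78, E6.wt a i = n → i ∈ s) {x : L} (hx : ⁅h, x⁆ = (n : ℂ) • x) :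
    x ∈ Submodule.span ℂ (B '' s) := by
  have hmem : x ∈ (ad ℂ L h).eigenspace (n : ℂ) := End.mem_eigenspace_iff.mpr hx
  rw [hB.eigenspace_eq_span] at hmem
  refine Submodule.span_mono ?_ hmem
  rintro _ ⟨i, hi, rfl⟩
  exact ⟨i, hs i i.2 hi, (hB.basis_apply i).symm⟩

lemma eq_zero_of_forall_wt_ne (hB : IsE6Grading B h a) {n : ℤ} (hn : ∀ i < 78, E6.wt a i ≠ n)
    {x : L} (hx : ⁅h, x⁆ = (n : ℂ) • x) : x = 0 := by
  simpa using hB.mem_span_of_lie_eq_smul (s := ∅) (fun i hi h => hn i hi h) hx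

/-- If the `k`-th simple root does not occur in `x`, then the brackets of `x` with the root vector
of the opposite root stay in the sum of the positive root spaces. -/
lemma lie_neg_simple_mem_span (hB : IsE6Grading B h a) {k : Fin 6} {x : L}
    (hx : x ∈ Submodule.span ℂ (B '' {i | i < 36 ∧ i ≠ k})) :
    ⁅x, B (36 + k)⁆ ∈ Submodule.span ℂ (B '' Set.Iio 36) := by
  induction hx using Submodule.span_induction with
  | mem _ hi =>
    obtain ⟨i, ⟨hi, hik⟩, rfl⟩ := hi
    rw [hB.lie]
    exact combine_mem fun t ht => Submodule.subset_span
      ⟨t.1, E6.lt_of_mem_sc_neg_simple ⟨i, hi⟩ k hik t ht, rfl⟩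
  | zero => simp
  | add x y _ _ hx hy => simpa only [add_lie] using add_mem hx hy
  | smul c x _ hx => simpa only [smul_lie] using Submodule.smul_mem _ c hx

lemma eq_zero_of_mem_span (hB : IsE6Grading B h a) (ha : ∀ k, 0 ≤ a k) {n : ℤ} (hn : n < 0) {x : L}
    (hx : x ∈ Submodule.span ℂ (B '' Set.Iio 36)) (hhx : ⁅h, x⁆ = (n : ℂ) • x) : x = 0 := by
  have image_subset : B '' Set.Iio 36 ⊆ hB.basis '' {i | i.1 < 36} := by
    rintro _ ⟨i, hi, rfl⟩
    exact ⟨⟨i, lt_trans hi (by norm_num)⟩, hi, hB.basis_apply _⟩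
  have hsupp := hB.basis.mem_span_image.mp (Submodule.span_mono image_subset hx)
  refine hB.basis.ext_elem fun i => ?_
  rw [map_zero, Finsupp.zero_apply]
  by_contra hne
  have hi : i.1 < 36 := hsupp (Finsupp.mem_support_iff.mpr hne)
  have hwt : E6.wt a i ≠ n := (hn.trans_le (E6.wt_nonneg ha hi)).ne'
  exact hne (repr_eq_zero_of_diagonal hB.basis hB.ad_basis hhx (Int.cast_injective.ne hwt))

variable [FiniteDimensional ℂ L] [IsKilling ℂ L]

/-- If `2 < a k`, then `e`, which has weight `2`, does not involve the `k`-th simple root, so `ad e`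
maps the root vector opposite to it to a positive element of negative weight `2 - a k`. -/
lemma le_two (hB : IsE6Grading B h a) (t : IsSl2Triple h e f) (he : IsDistinguished L e)
    (ha : ∀ k, 0 ≤ a k) (k : Fin 6) : a k ≤ 2 := by
  by_contra! hlt
  have he_mem : e ∈ Submodule.span ℂ (B '' {i | i < 36 ∧ i ≠ k}) := by
    refine hB.mem_span_of_lie_eq_smul (n := 2) (fun i _ hwt => ?_)
      (by simpa using t.lie_h_e_smul ℂ)
    refine ⟨E6.lt_of_wt_pos ha (by omega), ?_⟩
    rintro rfl
    rw [E6.wt_simple] at hwt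
    omega
  have hweight : ⁅h, B (36 + k)⁆ = ((-a k : ℤ) : ℂ) • B (36 + k) := by
    rw [hB.weight _ (by omega), E6.wt_neg_simple]
  have hlie : ⁅e, B (36 + k)⁆ = 0 := by
    refine hB.eq_zero_of_mem_span ha (n := 2 - a k) (by omega)
      (hB.lie_neg_simple_mem_span he_mem) ?_
    rw [leibniz_lie, hweight, t.lie_h_e_smul ℂ, smul_lie, lie_smul, ← add_smul]
    push_cast
    rw [sub_eq_add_neg]
  exact hB.ne_zero (by omega) (he.eq_zero_of_nonpos t (by omega) hlie hweight)

/-- The injections `ad e : 𝔤(-2) → 𝔤(0) → 𝔤(2)` are bijections, as `dim 𝔤(-2) = dim 𝔤(2)`. -/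
theorem mem_of_isDistinguished (hB : IsE6Grading B h a) (t : IsSl2Triple h e f)
    (he : IsDistinguished L e) (ha : ∀ k, 0 ≤ a k) :
    a ∈ [![2, 0, 0, 2, 0, 2], ![2, 2, 2, 0, 2, 2], ![2, 2, 2, 2, 2, 2]] := by
  have h₀ := he.finrank_eigenspace_le t le_rfl
  have h₂ := he.finrank_eigenspace_le t (n := -2) (by norm_num)
  rw [hB.finrank_eigenspace, hB.finrank_eigenspace] at h₀ h₂
  rw [E6.mult_neg] at h₂
  exact E6.mem_of_mult_eq ha (hB.le_two t he ha) (le_antisymm h₀ h₂)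

end IsE6Grading

/-! ### Coordinates of centralizers -/

namespace SparseVector

/-- The total coefficient of the index `k`. -/
def coeff (u : SparseVector) (k : ℕ) : ℤ :=
  u.foldr (fun t c => bif Nat.beq t.1 k then t.2 + c else c) 0

end SparseVector

namespace E6

open SparseVector

/-- The rows of the matrix of `ad u`. -/
def adRows (u : SparseVector) : List (List ℤ) :=
  (List.range 78).map fun k => (List.range 78).map fun i => coeff (sparseLie sc u [(i, 1)]) k

/-- The row of the linear form taking the `k`-th coordinate. -/
def unitRow (k : ℕ) : List ℤ := (List.range 78).map fun i => if k = i then 1 else 0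

end E6

namespace IsE6Basis

open Module LieAlgebra SparseVector Elimination

variable {L : Type*} [LieRing L] [LieAlgebra ℂ L] {B : ℕ → L}

lemma lie_combine (hB : IsE6Basis B) (u v : SparseVector) :
    ⁅combine B u, combine B v⁆ = combine B (sparseLie E6.sc u v) :=
  (combine_sparseLie hB.lie u v).symm

/-- The coordinates with respect to an E₆ basis, as a sequence. -/
noncomputable def coord (hB : IsE6Basis B) (x : L) (k : ℕ) : ℂ :=
  if hk : k < 78 then hB.basis.repr x ⟨k, hk⟩ else 0

lemma coord_val (hB : IsE6Basis B) (x : L) (k : Fin 78) : hB.coord x k = hB.basis.repr x k :=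
  dif_pos k.2

lemma rowApply_unitRow (hB : IsE6Basis B) (x : L) (k : Fin 78) :
    rowApply (E6.unitRow k) (hB.coord x) = hB.basis.repr x k := by
  rw [E6.unitRow, rowApply_map_range, ← hB.coord_val, Finset.sum_eq_single_of_mem k.1 (by simp)]
  · simp
  · intro i _ hi
    simp [hi.symm]

variable [FiniteDimensional ℂ L] [IsKilling ℂ L]

lemma eq_zero_of_forall_lie_eq_zero (hB : IsE6Basis B) {x : L} (hx : ∀ i : Fin 78, ⁅x, B i⁆ = 0) :
    x = 0 := by
  have had : ad ℂ L x = 0 := hB.basis.ext fun i => by simpa using hx i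
  have hmem : x ∈ center ℂ L := (LieModule.mem_maxTrivSubmodule ℂ L L x).mpr fun y => by
    rw [← lie_skew, neg_eq_zero]
    exact congr($had y)
  simpa only [center_eq_bot, LieSubmodule.mem_bot] using hmem

lemma eq_zero_of_le (hB : IsE6Basis B) {i : ℕ} (hi : 78 ≤ i) : B i = 0 :=
  hB.eq_zero_of_forall_lie_eq_zero fun j => by rw [hB.lie, E6.sc_eq_nil (.inl hi), combine]

lemma repr_combine (hB : IsE6Basis B) (u : SparseVector) (k : Fin 78) :
    hB.basis.repr (combine B u) k = coeff u k := by
  have repr_apply (i : ℕ) : hB.basis.repr (B i) k = if Nat.beq i k then 1 else 0 := by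
    rcases lt_or_ge i 78 with hi | hi
    · rw [← hB.basis_apply ⟨i, hi⟩, Basis.repr_self, Finsupp.single_apply]
      simp [Fin.ext_iff]
    · rw [hB.eq_zero_of_le hi, if_neg (by simp; omega)]
      simp
  induction u with
  | nil => simp [combine, coeff]
  | cons t u ih =>
    rw [combine, map_add, map_zsmul, Finsupp.add_apply, Finsupp.smul_apply, ih, repr_apply]
    by_cases h : Nat.beq t.1 k <;> simp [coeff, h]

lemma rowApply_coord_of_mem_adRows (hB : IsE6Basis B) {u : SparseVector} {x : L}
    (hx : ⁅combine B u, x⁆ = 0) {r : List ℤ} (hr : r ∈ E6.adRows u) :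
    rowApply r (hB.coord x) = 0 := by
  obtain ⟨k, hk, rfl⟩ := List.mem_map.mp hr
  replace hk : k < 78 := List.mem_range.mp hk
  have hrepr := congr(hB.basis.repr $hx ⟨k, hk⟩)
  rw [← hB.basis.sum_repr x] at hrepr
  simp only [lie_sum, lie_smul, map_sum, map_smul, Finsupp.finsetSum_apply, Finsupp.smul_apply,
    map_zero, Finsupp.zero_apply, smul_eq_mul] at hrepr
  rw [rowApply_map_range, ← Fin.sum_univ_eq_sum_range
    (fun i => (coeff (sparseLie E6.sc u [(i, 1)]) k : ℂ) * hB.coord x i), ← hrepr]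
  refine Finset.sum_congr rfl fun i _ => ?_
  rw [mul_comm, hB.coord_val, hB.basis_apply, ← hB.repr_combine _ ⟨k, hk⟩, ← hB.lie_combine]
  simp [combine]

/-- If the linear system expressing that `x` commutes with the given vectors and has vanishing
`pivot` coordinates has full rank, then these coordinates determine every solution. -/
theorem eq_sum_of_fullRank (hB : IsE6Basis B) {c : ℕ} {U : List SparseVector}
    {Z : Fin c → SparseVector} {pivot : Fin c → Fin 78}
    (hlie : ∀ u ∈ U, ∀ j, sparseLie E6.sc u (Z j) = [])
    (hpivot : ∀ i j, coeff (Z j) (pivot i) = if i = j then 1 else 0)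
    (hrank : fullRank 78
      (U.flatMap E6.adRows ++ (List.finRange c).map fun j => E6.unitRow (pivot j)) = true)
    {x : L} (hx : ∀ u ∈ U, ⁅combine B u, x⁆ = 0) :
    x = ∑ j, hB.basis.repr x (pivot j) • combine B (Z j) := by
  set y := x - ∑ j, hB.basis.repr x (pivot j) • combine B (Z j) with hy
  have lie_y (u) (hu : u ∈ U) : ⁅combine B u, y⁆ = 0 := by
    simp [hy, lie_sum, hx u hu, hB.lie_combine, hlie u hu, combine]
  have repr_y (i : Fin c) : hB.basis.repr y (pivot i) = 0 := by
    simp [hy, hB.repr_combine, hpivot]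
  have coord_y : ∀ k, hB.coord y k = 0 := by
    refine eq_zero_of_fullRank hrank (fun r hr => ?_) fun k hk => dif_neg hk.not_gt
    rcases List.mem_append.mp hr with hr | hr
    · obtain ⟨u, hu, hr⟩ := List.mem_flatMap.mp hr
      exact hB.rowApply_coord_of_mem_adRows (lie_y u hu) hr
    · obtain ⟨i, -, rfl⟩ := List.mem_map.mp hr
      rw [hB.rowApply_unitRow, repr_y]
  refine sub_eq_zero.mp (hB.basis.ext_elem fun k => ?_)
  rw [← hB.coord_val, coord_y, map_zero, Finsupp.zero_apply]

end IsE6Basis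

/-! ### Normal forms of distinguished sl₂-triples -/

namespace E6

open SparseVector Elimination

/-- Coordinates, with respect to an E₆ basis, of `e` and `f` in a distinguished `sl₂`-triple with
given weighted Dynkin diagram, together with data determining the centre of the centralizer of `e`:
some elements commuting with `e`, and vectors `center j` spanning the elements that commute with
all of these. The vectors `center j` are dual to the coordinates of index `pivot j`. -/
structure NormalForm (c : ℕ) where
  diagram : Fin 6 → ℤ
  e : SparseVector
  f : SparseVector
  commuting : List SparseVector
  center : Fin c → SparseVector
  pivot : Fin c → Fin 78

/-- The identities between coordinates required of a normal form. -/
structure NormalForm.IsValid {c : ℕ} (D : NormalForm c) : Prop where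
  wt_e : ∀ t ∈ D.e, t.1 < 78 ∧ wt D.diagram t.1 = 2
  wt_f : ∀ t ∈ D.f, t.1 < 78 ∧ wt D.diagram t.1 = -2
  lie_lie : ∀ i : Fin 78,
    addSingle (-wt D.diagram i) i (sparseLie sc (sparseLie sc D.e D.f) [(i.1, 1)]) = []
  lie_e : ∀ u ∈ D.commuting, sparseLie sc u D.e = []
  lie_center : ∀ u ∈ D.e :: D.commuting, ∀ j, sparseLie sc u (D.center j) = []
  coeff_center : ∀ i j, coeff (D.center j) (D.pivot i) = if i = j then 1 else 0
  fullRank : fullRank 78 ((D.e :: D.commuting).flatMap adRows ++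
    (List.finRange c).map fun j => unitRow (D.pivot j)) = true

/-- The normal form of the regular nilpotent elements. -/
def regular : NormalForm 6 where
  diagram := ![2, 2, 2, 2, 2, 2]
  e := [(0, 1), (1, 1), (2, 1), (3, 1), (4, 1), (5, 1)]
  f := [(36, 16), (37, 22), (38, 30), (39, 42), (40, 30), (41, 16)]
  commuting := []
  center := ![[(0, 1), (1, 1), (2, 1), (3, 1), (4, 1), (5, 1)],
    [(16, 1), (17, 1), (19, -1), (20, 1)],
    [(21, -1), (22, -2), (23, -1), (24, 1)],
    [(28, 1), (29, 1), (30, 1)],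
    [(31, 1), (32, 1)],
    [(35, 1)]]
  pivot := ![0, 16, 24, 28, 31, 35]

/-- The normal form of the subregular nilpotent elements, the orbit E₆(a₁). -/
def subregular : NormalForm 5 where
  diagram := ![2, 2, 2, 0, 2, 2]
  e := [(0, 1), (1, 1), (2, 1), (5, 1), (8, 1), (9, 1)]
  f := [(36, 12), (37, 16), (38, 14), (40, 14), (41, 12), (43, -8), (44, 8), (45, 22)]
  commuting := [[(6, -1), (10, -2), (11, 1), (12, -1), (13, 1), (14, -1), (15, 1)],
    [(16, -2), (17, -1), (18, 1), (19, 2), (20, -1), (23, 2)]]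
  center := ![[(0, 1), (1, 1), (2, 1), (5, 1), (8, 1), (9, 1)],
    [(21, 1), (22, 1), (25, 1), (27, 1)],
    [(26, 1), (28, 1), (29, 2), (30, 1)],
    [(33, 1)],
    [(35, 1)]]
  pivot := ![0, 21, 26, 33, 35]

/-- The normal form of the third class of distinguished nilpotent elements, the orbit E₆(a₃). -/
def a3 : NormalForm 4 where
  diagram := ![2, 0, 0, 2, 0, 2]
  e := [(0, 1), (5, 1), (6, 1), (10, 1), (3, 1), (18, 1)]
  f := [(36, 4), (39, 10), (41, 4), (42, 4), (44, 4), (45, 4), (46, 4), (48, 4), (49, 4), (54, 10)]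
  commuting := [[(0, 1), (5, 1), (7, -1), (12, 1), (13, 1)],
    [(6, -1), (8, -1), (9, -1), (10, -1), (14, 1)]]
  center := ![[(0, 1), (5, 1), (6, 1), (10, 1), (3, 1), (18, 1)],
    [(31, -1), (32, 1)],
    [(34, 1)],
    [(35, 1)]]
  pivot := ![3, 32, 34, 35]

set_option maxRecDepth 4000 in
lemma isValid_regular : regular.IsValid := by
  constructor <;> decide +kernel

set_option maxRecDepth 4000 in
lemma isValid_subregular : subregular.IsValid := by
  constructor <;> decide +kernel

set_option maxRecDepth 4000 in
lemma isValid_a3 : a3.IsValid := by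
  constructor <;> decide +kernel

end E6

/-! ### Property (P) -/

section Pairing

variable {L : Type*} [LieRing L] [LieAlgebra ℂ L]

/-- The subspace `[[f, 𝔤ᵉ], v]`. -/
def lieLieCentralizer (e f v : L) : Submodule ℂ L where
  carrier := {z | ∃ x : L, ⁅x, e⁆ = 0 ∧ ⁅⁅f, x⁆, v⁆ = z}
  add_mem' := by
    rintro _ _ ⟨x, hx, rfl⟩ ⟨y, hy, rfl⟩
    exact ⟨x + y, by rw [add_lie, hx, hy, add_zero], by rw [lie_add, add_lie]⟩
  zero_mem' := ⟨0, by simp⟩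
  smul_mem' := by
    rintro c _ ⟨x, hx, rfl⟩
    exact ⟨c • x, by rw [smul_lie, hx, smul_zero], by rw [lie_smul, smul_lie]⟩

end Pairing

namespace E6

lemma coef_le_coef_highest : ∀ (i : Fin 78) (k : Fin 6), coef i k ≤ coef 35 k := by
  decide +kernel

lemma wt_le_wt_highest {a : Fin 6 → ℤ} (ha : ∀ k, 0 ≤ a k) {i : ℕ} (hi : i < 78) :
    wt a i ≤ wt a 35 :=
  Finset.sum_le_sum fun k _ =>
    mul_le_mul_of_nonneg_left (by simpa using coef_le_coef_highest ⟨i, hi⟩ k) (ha k)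

end E6

namespace IsE6Grading

open Module LieAlgebra SparseVector

variable {L : Type*} [LieRing L] [LieAlgebra ℂ L] {B : ℕ → L} {e h f : L} {a : Fin 6 → ℤ}

lemma eq_zero_of_wt_highest_lt (hB : IsE6Grading B h a) (ha : ∀ k, 0 ≤ a k) {n : ℤ}
    (hn : E6.wt a 35 < n) {x : L} (hx : ⁅h, x⁆ = (n : ℂ) • x) : x = 0 :=
  hB.eq_zero_of_forall_wt_ne (fun _ hi => ((E6.wt_le_wt_highest ha hi).trans_lt hn).ne) hx

lemma lie_highest_eq_zero (hB : IsE6Grading B h a) (ha : ∀ k, 0 ≤ a k) {n : ℤ} (hn : 0 < n) {x : L}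
    (hx : ⁅h, x⁆ = (n : ℂ) • x) : ⁅B 35, x⁆ = 0 := by
  refine hB.eq_zero_of_wt_highest_lt ha (n := E6.wt a 35 + n) (by omega) ?_
  rw [leibniz_lie, hB.weight 35 (by norm_num), hx, smul_lie, lie_smul, ← add_smul, Int.cast_add]

lemma combine_mem_eigenspace (hB : IsE6Grading B h a) {u : SparseVector} {n : ℤ}
    (hu : ∀ t ∈ u, t.1 < 78 ∧ E6.wt a t.1 = n) : combine B u ∈ (ad ℂ L h).eigenspace (n : ℂ) := by
  refine combine_mem fun t ht => End.mem_eigenspace_iff.mpr ?_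
  obtain ⟨hlt, rfl⟩ := hu t ht
  exact hB.weight t.1 hlt

variable [FiniteDimensional ℂ L] [IsKilling ℂ L]

lemma inCenterOfCentralizer_highest (hB : IsE6Grading B h a) (ha : ∀ k, 0 ≤ a k)
    (t : IsSl2Triple h e f) (he : IsDistinguished L e) : InCenterOfCentralizer L e (B 35) := by
  refine ⟨hB.lie_highest_eq_zero ha two_pos (by simpa using t.lie_h_e_smul ℂ), fun y hy => ?_⟩
  replace hy : y ∈ (LieModule.toEnd ℂ L L e).ker := by
    rw [LinearMap.mem_ker, LieModule.toEnd_apply_apply, ← lie_skew, hy, neg_zero]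
  rw [ker_e_eq_iSup_inf_eigenspace ℂ L t] at hy
  induction hy using Submodule.iSup_induction' with
  | mem n y hy =>
    have hhy : ⁅h, y⁆ = ((n : ℤ) : ℂ) • y := by simpa using End.mem_eigenspace_iff.mp hy.2
    rcases n.eq_zero_or_pos with rfl | hn
    · rw [he.eq_zero_of_nonpos t le_rfl hy.1 hhy, lie_zero]
    · exact hB.lie_highest_eq_zero ha (by exact_mod_cast hn) hhy
  | zero => exact lie_zero _
  | add y z _ _ hy hz => rw [lie_add, hy, hz, add_zero]

/-- The largest eigenvalue of `ad h` on the centre of `𝔤ᵉ` is the weight of the highest root. -/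
theorem propertyP_of_forall_mem (hB : IsE6Grading B h a) (ha : ∀ k, 0 ≤ a k)
    (t : IsSl2Triple h e f) (he : IsDistinguished L e)
    (hmem : ∀ v, InCenterOfCentralizer L e v → v ≠ 0 →
      ∀ i < 78, E6.wt a i = E6.wt a 35 → B i ∈ lieLieCentralizer e f v) :
    PropertyP L e h f := by
  rintro m ⟨z₀, hz₀, hz₀c, hz₀h⟩ hmax v hv hv0 z - hzh
  have highest_le : ((E6.wt a 35 : ℤ) : ℂ) ≤ m :=
    hmax _ ⟨B 35, hB.ne_zero (by norm_num), hB.inCenterOfCentralizer_highest ha t he,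
      hB.weight 35 (by norm_num)⟩
  obtain ⟨n, rfl⟩ : ∃ n : ℕ, m = n := by
    have hprim : t.HasPrimitiveVectorWith z₀ m :=
      ⟨hz₀, hz₀h, by rw [← lie_skew, hz₀c.1, neg_zero]⟩
    exact hprim.exists_nat
  have le_highest : (n : ℤ) ≤ E6.wt a 35 := by
    by_contra! hlt
    exact hz₀ (hB.eq_zero_of_wt_highest_lt ha hlt (by simpa using hz₀h))
  have hn : (n : ℤ) = E6.wt a 35 := le_antisymm le_highest (by exact_mod_cast highest_le)
  have hspan : z ∈ Submodule.span ℂ (B '' {i | i < 78 ∧ E6.wt a i = E6.wt a 35}) :=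
    hB.mem_span_of_lie_eq_smul (n := n) (fun i hi hwt => by exact ⟨hi, hwt.trans hn⟩)
      (by simpa using hzh)
  suffices B '' {i | i < 78 ∧ E6.wt a i = E6.wt a 35} ⊆ lieLieCentralizer e f v from
    Submodule.span_le.mpr this hspan
  rintro _ ⟨i, ⟨hi, hwt⟩, rfl⟩
  exact hmem v hv hv0 i hi hwt

lemma isSl2Triple_combine {c : ℕ} {D : E6.NormalForm c} (hB : IsE6Grading B h D.diagram)
    (hD : D.IsValid) (h0 : h ≠ 0) : IsSl2Triple h (combine B D.e) (combine B D.f) where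
  h_ne_zero := h0
  lie_e_f := by
    rw [← sub_eq_zero]
    refine hB.eq_zero_of_forall_lie_eq_zero fun i => ?_
    have hlie := congr(combine B $(hD.lie_lie i))
    rw [combine_addSingle, ← hB.lie_combine, ← hB.lie_combine] at hlie
    simp only [combine, one_smul, add_zero, neg_smul, neg_add_eq_zero] at hlie
    rw [sub_lie, ← hlie, hB.weight i i.2, Int.cast_smul_eq_zsmul, sub_self]
  lie_h_e_nsmul := by
    rw [← ofNat_smul_eq_nsmul ℂ]
    simpa using End.mem_eigenspace_iff.mp (hB.combine_mem_eigenspace hD.wt_e)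
  lie_h_f_nsmul := by
    rw [← ofNat_smul_eq_nsmul ℂ]
    simpa using End.mem_eigenspace_iff.mp (hB.combine_mem_eigenspace hD.wt_f)

/-- The triple of the normal form is conjugate to the given one by an automorphism fixing `h`. -/
theorem exists_normalForm {c : ℕ} {D : E6.NormalForm c} (hB : IsE6Grading B h D.diagram)
    (hD : D.IsValid) (t : IsSl2Triple h e f) :
    ∃ B' : ℕ → L, IsE6Grading B' h D.diagram ∧ combine B' D.e = e ∧ combine B' D.f = f := by
  obtain ⟨σ, hσh, hσe, hσf⟩ :=
    exists_equiv_of_isSl2Triple (hB.isSl2Triple_combine hD t.h_ne_zero) t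
  have hBσ := hB.map σ
  rw [hσh] at hBσ
  exact ⟨_, hBσ, (map_combine (σ : L →+ L) B D.e).symm.trans hσe,
    (map_combine (σ : L →+ L) B D.f).symm.trans hσf⟩

end IsE6Grading

/-- The subspace `[[f, 𝔤ᵉ], v]` for `e` and `f` in normal form, where `s` is the vector of
coordinates of `v` with respect to the basis of the centre. -/
abbrev E6.NormalForm.lieLieCentralizer {L : Type*} [LieRing L] [LieAlgebra ℂ L] {c : ℕ}
    (D : E6.NormalForm c) (B : ℕ → L) (s : Fin c → ℂ) : Submodule ℂ L :=
  _root_.lieLieCentralizer (SparseVector.combine B D.e) (SparseVector.combine B D.f)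
    (∑ j, s j • SparseVector.combine B (D.center j))

namespace IsE6Basis

open SparseVector

variable {L : Type*} [LieRing L] [LieAlgebra ℂ L] {B : ℕ → L} {c : ℕ} {D : E6.NormalForm c}
  {X : SparseVector} {s : Fin c → ℂ}

lemma sum_smul_mem_lieLieCentralizer (hB : IsE6Basis B) (hX : sparseLie E6.sc X D.e = [])
    (s : Fin c → ℂ) :
    ∑ j, s j • combine B (sparseLie E6.sc (sparseLie E6.sc D.f X) (D.center j)) ∈
      D.lieLieCentralizer B s := by
  refine ⟨combine B X, by rw [hB.lie_combine, hX, combine], ?_⟩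
  simp only [lie_sum, lie_smul, hB.lie_combine]

lemma mem_lieLieCentralizer_of_leading (hB : IsE6Basis B) (hX : sparseLie E6.sc X D.e = [])
    {i : Fin c} (hi : s i ≠ 0) (hlt : ∀ j < i, s j = 0) {k : ℕ} {κ : ℤ} (hκ : κ ≠ 0)
    (hXi : sparseLie E6.sc (sparseLie E6.sc D.f X) (D.center i) = [(k, κ)])
    (hgt : ∀ j > i, sparseLie E6.sc (sparseLie E6.sc D.f X) (D.center j) = []) :
    B k ∈ D.lieLieCentralizer B s := by
  have hsum : ∑ j, s j • combine B (sparseLie E6.sc (sparseLie E6.sc D.f X) (D.center j)) =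
      (s i * κ) • B k := by
    rw [Finset.sum_eq_single_of_mem i (Finset.mem_univ i) fun j _ hji => ?_, hXi]
    · simp [combine, mul_smul, Int.cast_smul_eq_zsmul]
    · rcases hji.lt_or_gt with hji | hji
      · rw [hlt j hji, zero_smul]
      · rw [hgt j hji, combine, smul_zero]
  have hmem := hB.sum_smul_mem_lieLieCentralizer hX s
  rw [hsum] at hmem
  exact (Submodule.smul_mem_iff _ (mul_ne_zero hi (Int.cast_ne_zero.mpr hκ))).mp hmem

end IsE6Basis

lemma exists_leading_coordinate {ι K : Type*} [LinearOrder ι] [WellFoundedLT ι] [Zero K]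
    {s : ι → K} (hs : s ≠ 0) : ∃ i, s i ≠ 0 ∧ ∀ j < i, s j = 0 := by
  obtain ⟨i, hi, hmin⟩ := exists_minimal_of_wellFoundedLT (fun i => s i ≠ 0) (Function.ne_iff.mp hs)
  exact ⟨i, hi, fun j hj => by_contra fun hne => hj.not_ge (hmin hne hj.le)⟩

namespace IsE6Grading

open Module LieAlgebra SparseVector

variable {L : Type*} [LieRing L] [LieAlgebra ℂ L] [FiniteDimensional ℂ L] [IsKilling ℂ L]
  {B : ℕ → L} {e h f : L} {c : ℕ} {D : E6.NormalForm c}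

theorem propertyP_of_normalForm (hB : IsE6Grading B h D.diagram) (hD : D.IsValid)
    (ha : ∀ k, 0 ≤ D.diagram k) (t : IsSl2Triple h e f) (he : IsDistinguished L e)
    (hmem : ∀ {B : ℕ → L}, IsE6Basis B → ∀ s : Fin c → ℂ, s ≠ 0 →
      ∀ i < 78, E6.wt D.diagram i = E6.wt D.diagram 35 →
        B i ∈ D.lieLieCentralizer B s) :
    PropertyP L e h f := by
  obtain ⟨B, hB, rfl, rfl⟩ := hB.exists_normalForm hD t
  refine hB.propertyP_of_forall_mem ha t he fun v hv hv0 => ?_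
  have hcomm : ∀ u ∈ D.e :: D.commuting, ⁅combine B u, v⁆ = 0 := by
    intro u hu
    rw [← lie_skew, neg_eq_zero]
    rcases List.mem_cons.mp hu with rfl | hu
    · exact hv.1
    · exact hv.2 _ (by rw [hB.lie_combine, hD.lie_e u hu, combine])
  have hsum := hB.eq_sum_of_fullRank hD.lie_center hD.coeff_center hD.fullRank hcomm
  rw [hsum]
  refine hmem hB.toIsE6Basis _ fun hs => hv0 ?_
  rw [hsum]
  exact Finset.sum_eq_zero fun j _ => by rw [congrFun hs j, Pi.zero_apply, zero_smul]

/-- The pairing `(x, v) ↦ ⁅⁅f, x⁆, v⁆` is triangular with respect to the elements `Y i` of the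
centralizer of `e` and the basis of its centre. -/
theorem propertyP_of_triangular (hB : IsE6Grading B h D.diagram) (hD : D.IsValid)
    (ha : ∀ k, 0 ≤ D.diagram k) (t : IsSl2Triple h e f) (he : IsDistinguished L e)
    (hhighest : ∀ i : Fin 78, E6.wt D.diagram i = E6.wt D.diagram 35 → i = 35)
    (Y : Fin c → SparseVector) (κ : Fin c → ℤ) (hY : ∀ i, sparseLie E6.sc (Y i) D.e = [])
    (hκ : ∀ i, κ i ≠ 0)
    (hpair : ∀ i j, i ≤ j → sparseLie E6.sc (sparseLie E6.sc D.f (Y i)) (D.center j) =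
      if i = j then [(35, κ i)] else []) :
    PropertyP L e h f := by
  refine hB.propertyP_of_normalForm hD ha t he fun hB s hs k hk hwt => ?_
  obtain rfl : k = 35 := congrArg Fin.val (hhighest ⟨k, hk⟩ hwt)
  obtain ⟨i, hi, hlt⟩ := exists_leading_coordinate hs
  exact hB.mem_lieLieCentralizer_of_leading (hY i) hi hlt (hκ i)
    (by rw [hpair i i le_rfl, if_pos rfl]) fun j hj => by rw [hpair i j hj.le, if_neg hj.ne]

set_option maxRecDepth 4000 in
theorem propertyP_of_regular (hB : IsE6Grading B h ![2, 2, 2, 2, 2, 2]) (t : IsSl2Triple h e f)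
    (he : IsDistinguished L e) : PropertyP L e h f :=
  propertyP_of_triangular (D := E6.regular) hB E6.isValid_regular (by decide) t he
    (by decide +kernel) (E6.regular.center ∘ Fin.rev) ![-22, -32, 70, 70, -32, -22]
    (by decide +kernel) (by decide) (by decide +kernel)

set_option maxRecDepth 4000 in
theorem propertyP_of_subregular (hB : IsE6Grading B h ![2, 2, 2, 0, 2, 2]) (t : IsSl2Triple h e f)
    (he : IsDistinguished L e) : PropertyP L e h f :=
  propertyP_of_triangular (D := E6.subregular) hB E6.isValid_subregular (by decide) t he
    (by decide +kernel)
    ![[(35, 1)], [(26, 1), (28, 1), (29, 2), (30, 1)], [(21, 1), (22, 1), (25, 1), (27, 1)],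
      [(6, -1), (10, -2), (11, 1), (12, -1), (13, 1), (14, -1), (15, 1)],
      [(0, 1), (1, 1), (2, 1), (5, 1), (8, 1), (9, 1)]] ![-16, 40, 40, -28, -16]
    (by decide +kernel) (by decide) (by decide +kernel)

end IsE6Grading

lemma mem_and_mem_of_smul_combinations {K M : Type*} [Field K] [CharZero K] [AddCommGroup M]
    [Module K M] {R : Submodule K M} {α β : K} {x y : M} (h₀ : α ≠ 0 ∨ β ≠ 0)
    (hxy : α • x + β • y ∈ R) (hy : (α + 4 * β) • y ∈ R) (hx : (4 * α + β) • x ∈ R) :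
    x ∈ R ∧ y ∈ R := by
  by_cases hαβ : α + 4 * β = 0
  · have hα : α = -4 * β := by linear_combination hαβ
    have hβ : β ≠ 0 := by
      rintro rfl
      simp [hα] at h₀
    have hx : x ∈ R := (R.smul_mem_iff (by
      rw [show 4 * α + β = -15 * β by rw [hα]; ring]
      exact mul_ne_zero (by norm_num) hβ)).mp hx
    exact ⟨hx, (R.smul_mem_iff hβ).mp ((R.add_mem_iff_right (R.smul_mem α hx)).mp hxy)⟩
  · have hy : y ∈ R := (R.smul_mem_iff hαβ).mp hy
    have hαx : α • x ∈ R := (R.add_mem_iff_left (R.smul_mem β hy)).mp hxy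
    refine ⟨?_, hy⟩
    by_cases hα : α = 0
    · have hβ : β ≠ 0 := h₀.resolve_left (not_not_intro hα)
      exact (R.smul_mem_iff hβ).mp (by simpa [hα] using hx)
    · exact (R.smul_mem_iff hα).mp hαx

namespace IsE6Basis

open SparseVector

variable {L : Type*} [LieRing L] [LieAlgebra ℂ L] {B : ℕ → L} {s : Fin 4 → ℂ}

set_option maxRecDepth 4000 in
lemma mem_lieLieCentralizer_a3_of_leading_zero (hB : IsE6Basis B) (h₀ : s 0 ≠ 0) :
    B 34 ∈ E6.a3.lieLieCentralizer B s ∧ B 35 ∈ E6.a3.lieLieCentralizer B s :=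
  ⟨hB.mem_lieLieCentralizer_of_leading (X := [(34, 1)]) (κ := -10) (by decide +kernel) h₀ (by simp)
      (by norm_num) (by decide +kernel) (by decide +kernel),
    hB.mem_lieLieCentralizer_of_leading (X := [(35, 1)]) (κ := -10) (by decide +kernel) h₀ (by simp)
      (by norm_num) (by decide +kernel) (by decide +kernel)⟩

set_option maxRecDepth 4000 in
lemma mem_lieLieCentralizer_a3_of_leading_one (hB : IsE6Basis B) (h₀ : s 0 = 0) (h₁ : s 1 ≠ 0) :
    B 34 ∈ E6.a3.lieLieCentralizer B s ∧ B 35 ∈ E6.a3.lieLieCentralizer B s := by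
  have hlt : ∀ j < (1 : Fin 4), s j = 0 := fun j hj => by
    obtain rfl : j = 0 := by omega
    exact h₀
  exact ⟨hB.mem_lieLieCentralizer_of_leading (X := [(17, 1), (20, 1)]) (κ := -8)
      (by decide +kernel) h₁ hlt (by norm_num) (by decide +kernel) (by decide +kernel),
    hB.mem_lieLieCentralizer_of_leading (X := [(16, 1), (19, 1)]) (κ := -8)
      (by decide +kernel) h₁ hlt (by norm_num) (by decide +kernel) (by decide +kernel)⟩

lemma smul_add_smul_mem_lieLieCentralizer_a3 (hB : IsE6Basis B) (h₀ : s 0 = 0) (h₁ : s 1 = 0)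
    {X u v : SparseVector} (hX : sparseLie E6.sc X E6.a3.e = [])
    (hu : sparseLie E6.sc (sparseLie E6.sc E6.a3.f X) (E6.a3.center 2) = u)
    (hv : sparseLie E6.sc (sparseLie E6.sc E6.a3.f X) (E6.a3.center 3) = v) :
    s 2 • combine B u + s 3 • combine B v ∈ E6.a3.lieLieCentralizer B s := by
  have hmem := hB.sum_smul_mem_lieLieCentralizer hX s
  simpa only [Fin.sum_univ_four, h₀, h₁, zero_smul, zero_add, hu, hv] using hmem

set_option maxRecDepth 4000 in
/-- The pairing degenerates on two of the three test elements along `s 2 + 4 * s 3 = 0` and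
`4 * s 2 + s 3 = 0` respectively; these lines meet only in zero. -/
lemma mem_lieLieCentralizer_a3_of_top (hB : IsE6Basis B) (h₀ : s 0 = 0) (h₁ : s 1 = 0)
    (h : s 2 ≠ 0 ∨ s 3 ≠ 0) :
    B 34 ∈ E6.a3.lieLieCentralizer B s ∧ B 35 ∈ E6.a3.lieLieCentralizer B s := by
  set R := E6.a3.lieLieCentralizer B s
  have hxy : s 2 • combine B [(34, -10)] + s 3 • combine B [(35, -10)] ∈ R :=
    hB.smul_add_smul_mem_lieLieCentralizer_a3 h₀ h₁ (X := E6.a3.e) (by decide +kernel)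
      (by decide +kernel) (by decide +kernel)
  have hy : s 2 • combine B [(35, -2)] + s 3 • combine B [(35, -8)] ∈ R :=
    hB.smul_add_smul_mem_lieLieCentralizer_a3 h₀ h₁
      (X := [(0, 1), (5, 1), (7, -1), (12, 1), (13, 1)]) (by decide +kernel) (by decide +kernel)
      (by decide +kernel)
  have hx : s 2 • combine B [(34, 8)] + s 3 • combine B [(34, 2)] ∈ R :=
    hB.smul_add_smul_mem_lieLieCentralizer_a3 h₀ h₁
      (X := [(6, -1), (8, -1), (9, -1), (10, -1), (14, 1)]) (by decide +kernel)
      (by decide +kernel) (by decide +kernel)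
  simp only [combine, add_zero, ← Int.cast_smul_eq_zsmul ℂ] at hxy hy hx
  refine mem_and_mem_of_smul_combinations h ?_ ?_ ?_
  · refine (R.smul_mem_iff (s := (-10 : ℂ)) (by norm_num)).mp ?_
    convert hxy using 1
    module
  · refine (R.smul_mem_iff (s := (-2 : ℂ)) (by norm_num)).mp ?_
    convert hy using 1
    module
  · refine (R.smul_mem_iff (s := (2 : ℂ)) (by norm_num)).mp ?_
    convert hx using 1
    module

lemma mem_lieLieCentralizer_a3 (hB : IsE6Basis B) (hs : s ≠ 0) :
    B 34 ∈ E6.a3.lieLieCentralizer B s ∧ B 35 ∈ E6.a3.lieLieCentralizer B s := by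
  by_cases h₀ : s 0 = 0
  · by_cases h₁ : s 1 = 0
    · refine hB.mem_lieLieCentralizer_a3_of_top h₀ h₁ (or_iff_not_and_not.mpr fun h => hs ?_)
      ext j
      fin_cases j <;> simp_all
    · exact hB.mem_lieLieCentralizer_a3_of_leading_one h₀ h₁
  · exact hB.mem_lieLieCentralizer_a3_of_leading_zero h₀

end IsE6Basis

namespace IsE6Grading

open LieAlgebra

variable {L : Type*} [LieRing L] [LieAlgebra ℂ L] [FiniteDimensional ℂ L] [IsKilling ℂ L]
  {B : ℕ → L} {e h f : L}

theorem propertyP_of_a3 (hB : IsE6Grading B h ![2, 0, 0, 2, 0, 2]) (t : IsSl2Triple h e f)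
    (he : IsDistinguished L e) : PropertyP L e h f := by
  refine propertyP_of_normalForm (D := E6.a3) hB E6.isValid_a3 (by decide) t he
    fun hB s hs i hi hwt => ?_
  have hindex : ∀ i : Fin 78, E6.wt E6.a3.diagram i = E6.wt E6.a3.diagram 35 →
      i = 34 ∨ i = 35 := by
    decide +kernel
  obtain ⟨h₃₄, h₃₅⟩ := hB.mem_lieLieCentralizer_a3 hs
  rcases hindex ⟨i, hi⟩ hwt with h | h
  · obtain rfl : i = 34 := congrArg Fin.val h
    exact h₃₄
  · obtain rfl : i = 35 := congrArg Fin.val h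
    exact h₃₅

end IsE6Grading

theorem propertyP_of_type_5_general
    (L : Type*) [LieRing L] [LieAlgebra ℂ L] [FiniteDimensional ℂ L]
    [LieAlgebra.IsSimple ℂ L]
    (htype : Nonempty (L ≃ₗ⁅ℂ⁆ LieAlgebra.e₆ ℂ))
    (e h f : L) (ht : IsSl2Triple h e f) (hdist : IsDistinguished L e) :
    PropertyP L e h f := by
  obtain ⟨B, hB⟩ := E6.exists_isE6Basis L htype
  obtain ⟨B, a, hB, ha⟩ := hB.exists_isE6Grading (iSup_eigenspace_h_eq_top ℂ L ht)
  have hdiagram := hB.mem_of_isDistinguished ht hdist ha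
  simp only [List.mem_cons, List.not_mem_nil, or_false] at hdiagram
  rcases hdiagram with rfl | rfl | rfl
  · exact hB.propertyP_of_a3 ht hdist
  · exact hB.propertyP_of_subregular ht hdist
  · exact hB.propertyP_of_regular ht hdist

/-- Distinguished non-regular nilpotent elements of the complex simple
Lie algebra of type corresponding to `LieAlgebra.e₆` satisfy property (P). -/
theorem propertyP_of_type_5
    (L : Type*) [LieRing L] [LieAlgebra ℂ L] [FiniteDimensional ℂ L]
    [LieAlgebra.IsSimple ℂ L]
    (htype : Nonempty (L ≃ₗ⁅ℂ⁆ LieAlgebra.e₆ ℂ))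
    (e h f : L) (ht : IsSl2Triple h e f) (he : IsNilpotent (LieAlgebra.ad ℂ L e))
    (hdist : IsDistinguished L e)
    (hnonreg : Module.finrank ℂ ↥(centralizer L e) ≠ LieAlgebra.rank ℂ L) :
    PropertyP L e h f :=
  propertyP_of_type_5_general L htype e h f ht hdist
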